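/- arXiv:1011.4492 — 2 statements merged into one kernel-verified Lean document; each statement's English description precedes it below -/
import Mathlib

section
/- Suppose χ is a non-principal Dirichlet character modulo a prime p ≥ 10^{19}, and suppose χ is constant on the integers in the interval (N, N+H] for some integer N and positive integer H (i.e., χ(N+1) = χ(N+2) = ⋯ = χ(N+H)). Then H < 7.1·p^{1/4}·log p. -/
section
open Polynomial

noncomputable def dl {F : Type*} [Field F] (g f : F[X]) : F[X] := g * derivative f

noncomputable def nab {F : Type*} [Field F] (g l P : F[X]) : F[X] := g * derivative P + l * P

lemma dl_mul_eig {F : Type*} [Field F] {g U l : F[X]} (hU : dl g U = l * U) (P : F[X]) :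
    dl g (P * U) = nab g l P * U := by
  unfold dl nab at *
  rw [derivative_mul]
  linear_combination P * hU

lemma dl_iter_eig {F : Type*} [Field F] {g U l : F[X]} (hU : dl g U = l * U) (P : F[X]) (s : ℕ) :
    (dl g)^[s] (P * U) = (nab g l)^[s] P * U := by
  induction s with
  | zero => rfl
  | succ s ih => rw [Function.iterate_succ_apply', Function.iterate_succ_apply', ih, dl_mul_eig hU]

lemma dl_sum {F : Type*} [Field F] {ι : Type*} (g : F[X]) (I : Finset ι) (f : ι → F[X]) :
    dl g (∑ i ∈ I, f i) = ∑ i ∈ I, dl g (f i) := by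
  unfold dl
  rw [derivative_sum, Finset.mul_sum]

lemma dl_iter_sum {F : Type*} [Field F] {ι : Type*} (g : F[X]) (I : Finset ι) (f : ι → F[X])
    (s : ℕ) : (dl g)^[s] (∑ i ∈ I, f i) = ∑ i ∈ I, (dl g)^[s] (f i) := by
  induction s with
  | zero => rfl
  | succ s ih =>
    rw [Function.iterate_succ_apply', ih, dl_sum]
    simp only [Function.iterate_succ_apply']

lemma nab_natDegree {F : Type*} [Field F] {g l : F[X]} {m : ℕ} (hg : g.natDegree ≤ m + 1)
    (hl : l.natDegree ≤ m) {P : F[X]} {E : ℕ} (hP : P.natDegree ≤ E) :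
    (nab g l P).natDegree ≤ E + m := by
  unfold nab
  refine natDegree_add_le_of_degree_le ?_ ?_
  · by_cases h0 : P.natDegree = 0
    · rw [eq_C_of_natDegree_eq_zero h0]; simp
    · have := natDegree_derivative_lt h0
      refine natDegree_mul_le.trans ?_
      omega
  · refine natDegree_mul_le.trans ?_
    omega

lemma nab_iter_natDegree {F : Type*} [Field F] {g l : F[X]} {m : ℕ} (hg : g.natDegree ≤ m + 1)
    (hl : l.natDegree ≤ m) {P : F[X]} {E : ℕ} (hP : P.natDegree ≤ E) (s : ℕ) :
    ((nab g l)^[s] P).natDegree ≤ E + s * m := by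
  induction s with
  | zero => simpa using hP
  | succ s ih =>
    rw [Function.iterate_succ_apply']
    refine (nab_natDegree hg hl ih).trans ?_
    rw [Nat.succ_mul]; omega

lemma dl_dvd {F : Type*} [Field F] (g : F[X]) (a : F) (f : F[X]) (k : ℕ)
    (h : (X - C a) ^ k ∣ f) : (X - C a) ^ (k - 1) ∣ dl g f := by
  obtain ⟨r, rfl⟩ := h
  unfold dl
  rw [derivative_mul, derivative_X_sub_C_pow]
  refine Dvd.dvd.mul_left (dvd_add ?_ ?_) _
  · exact Dvd.dvd.mul_right (Dvd.intro_left _ rfl) _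
  · exact Dvd.dvd.mul_right (pow_dvd_pow _ (Nat.sub_le _ _)) _

lemma dl_iter_dvd {F : Type*} [Field F] (g : F[X]) (a : F) (f : F[X]) (k : ℕ)
    (h : (X - C a) ^ k ∣ f) (s : ℕ) : (X - C a) ^ (k - s) ∣ (dl g)^[s] f := by
  induction s with
  | zero => simpa using h
  | succ s ih =>
    rw [Function.iterate_succ_apply', Nat.sub_succ']
    exact dl_dvd _ _ _ _ ih

/-- Wronskian criterion in characteristic `p`. -/
lemma wronsk {F : Type*} [Field F] (p : ℕ) [Fact p.Prime] [CharP F p] {ι : Type*} [DecidableEq ι]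
    {g : F[X]} (hg : g ≠ 0) (n : ℕ) : ∀ (I : Finset ι), I.card = n → ∀ (f : ι → F[X]),
    (∀ c : ι → F[X], (∀ i ∈ I, derivative (c i) = 0) → ∑ i ∈ I, c i * f i = 0 →
      ∀ i ∈ I, c i = 0) →
    ∀ v : ι → F[X], (∀ s < n, ∑ i ∈ I, v i * (dl g)^[s] (f i) = 0) → ∀ i ∈ I, v i = 0 := by
  induction n with
  | zero =>
    intro I hI f _ v _ i hi
    rw [Finset.card_eq_zero] at hI
    simp [hI] at hi
  | succ n ih =>
    intro I hI f hind v hv i0 hi0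
    by_contra hne
    set G := v i0 with hG
    set w : ι → F[X] := fun i => G * dl g (v i) - v i * dl g G with hw
    have hw0 : w i0 = 0 := by simp only [hw]; rw [← hG]; ring
    have h1 : ∀ s < n, ∑ i ∈ I, dl g (v i) * (dl g)^[s] (f i) = 0 := by
      intro s hs
      have e1 := hv s (by omega)
      have e2 := hv (s+1) (by omega)
      have e3 : dl g (∑ i ∈ I, v i * (dl g)^[s] (f i)) = 0 := by rw [e1]; simp [dl]
      rw [dl_sum] at e3
      have e4 : ∑ i ∈ I, dl g (v i * (dl g)^[s] (f i)) =
          ∑ i ∈ I, dl g (v i) * (dl g)^[s] (f i) + ∑ i ∈ I, v i * (dl g)^[s+1] (f i) := by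
        rw [← Finset.sum_add_distrib]
        refine Finset.sum_congr rfl fun i _ => ?_
        rw [Function.iterate_succ_apply']
        unfold dl
        rw [derivative_mul]; ring
      rw [e4, e2, add_zero] at e3
      exact e3
    have h2 : ∀ s < n, ∑ i ∈ I.erase i0, w i * (dl g)^[s] (f i) = 0 := by
      intro s hs
      have e : ∑ i ∈ I, w i * (dl g)^[s] (f i) = 0 := by
        have : ∀ i ∈ I, w i * (dl g)^[s] (f i) =
          G * (dl g (v i) * (dl g)^[s] (f i)) - dl g G * (v i * (dl g)^[s] (f i)) := by
          intro i _; simp only [hw]; ring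
        rw [Finset.sum_congr rfl this, Finset.sum_sub_distrib, ← Finset.mul_sum, ← Finset.mul_sum,
          h1 s hs, hv s (by omega)]
        simp
      rw [← Finset.add_sum_erase _ _ hi0, hw0, zero_mul, zero_add] at e
      exact e
    have h3 : ∀ i ∈ I.erase i0, w i = 0 := by
      refine ih (I.erase i0) (by rw [Finset.card_erase_of_mem hi0, hI]; rfl) f ?_ w h2
      intro c hc hs i hi
      have := hind (fun j => if j = i0 then 0 else c j) ?_ ?_ i (Finset.mem_of_mem_erase hi)
      · simpa [Finset.ne_of_mem_erase hi] using this
      · intro j hj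
        by_cases h : j = i0
        · simp [h]
        · simpa [h] using hc j (Finset.mem_erase.2 ⟨h, hj⟩)
      · rw [← Finset.add_sum_erase _ _ hi0]
        simp only [if_true, zero_mul, zero_add]
        rw [← hs]
        refine Finset.sum_congr rfl fun j hj => ?_
        simp [Finset.ne_of_mem_erase hj]
    have h4 : ∀ i ∈ I, w i = 0 := by
      intro i hi
      by_cases h : i = i0
      · rw [h, hw0]
      · exact h3 i (Finset.mem_erase.2 ⟨h, hi⟩)
    have hp2 := (Fact.out : p.Prime).two_le
    have h5 : ∀ i ∈ I, v i * G ^ (p-1) = 0 := by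
      refine hind (fun i => v i * G ^ (p-1)) ?_ ?_
      · intro i hi
        have e := h4 i hi
        simp only [hw, dl] at e
        have e' : G * derivative (v i) - v i * derivative G = 0 := by
          have : g * (G * derivative (v i) - v i * derivative G) = 0 := by linear_combination e
          exact (mul_eq_zero.1 this).resolve_left hg
        obtain ⟨q, rfl⟩ : ∃ q, p = q + 2 := ⟨p - 2, by omega⟩
        have hc : ((q + 1 : ℕ) : F[X]) = -1 := by
          have : ((q + 2 : ℕ) : F[X]) = 0 := CharP.cast_eq_zero _ _
          push_cast at this ⊢
          linear_combination this
        show derivative (v i * G ^ (q+1)) = 0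
        rw [derivative_mul, derivative_pow, Nat.add_sub_cancel, map_natCast, hc]
        linear_combination G ^ q * e'
      · have := hv 0 (by omega)
        simp only [Function.iterate_zero, id] at this
        have e : ∀ i ∈ I, v i * G ^ (p-1) * f i = G ^ (p-1) * (v i * f i) := by intro i _; ring
        rw [Finset.sum_congr rfl e, ← Finset.mul_sum, this, mul_zero]
    have := h5 i0 hi0
    rcases mul_eq_zero.1 this with h | h
    · exact hne h
    · exact hne (pow_eq_zero_iff (by omega) |>.1 h)

lemma det_natDegree {F : Type*} [Field F] {n : ℕ} (B : Matrix (Fin n) (Fin n) F[X]) (b : Fin n → ℕ)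
    (h : ∀ i j, (B i j).natDegree ≤ b i) : B.det.natDegree ≤ ∑ i, b i := by
  rw [← Matrix.det_transpose, Matrix.det_apply]
  refine natDegree_sum_le_of_forall_le _ _ fun σ _ => ?_
  refine (natDegree_smul_le _ _).trans ?_
  refine (natDegree_prod_le _ _).trans ?_
  exact Finset.sum_le_sum fun i _ => h _ _

/-- Zero estimate at a point, with an injective parametrisation by `Fin n`. -/
lemma zero_est_fin {F : Type*} [Field F] (p : ℕ) [Fact p.Prime] [CharP F p]
    {g : F[X]} (hg : g ≠ 0) {m E k n : ℕ} (hgd : g.natDegree ≤ m + 1)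
    (U l P : Fin n → F[X]) (hU : ∀ i, dl g (U i) = l i * U i) (hl : ∀ i, (l i).natDegree ≤ m)
    (hP : ∀ i, (P i).natDegree ≤ E) (a : F) (ha : ∀ i, (U i).eval a ≠ 0)
    (hind : ∀ c : Fin n → F[X], (∀ i, derivative (c i) = 0) → ∑ i, c i * (P i * U i) = 0 →
      ∀ i, c i = 0)
    (hn : 0 < n) (hk : 2 * (n * (E + 1)) + m * n * n ≤ 2 * k)
    (hd : (X - C a) ^ k ∣ ∑ i, P i * U i) : False := by
  have hU0 : ∀ i, U i ≠ 0 := fun i h => ha i (by rw [h]; simp)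
  set B : Matrix (Fin n) (Fin n) F[X] := fun s i => (nab g (l i))^[(s : ℕ)] (P i) with hB
  have hdet : B.det ≠ 0 := by
    intro h0
    obtain ⟨v, hv0, hv⟩ := Matrix.exists_mulVec_eq_zero_iff.2 h0
    apply hv0
    have key := wronsk p hg n (Finset.univ : Finset (Fin n)) (by simp) (fun i => P i * U i)
      (fun c hc hs i _ => hind c (fun i => hc i (Finset.mem_univ _)) hs i)
      (fun i => v i * ∏ j ∈ Finset.univ.erase i, U j) ?_
    · funext i
      have := key i (Finset.mem_univ _)
      rcases mul_eq_zero.1 this with h | h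
      · exact h
      · exact absurd h (Finset.prod_ne_zero_iff.2 fun j _ => hU0 j)
    · intro s hs
      have e := congrFun hv ⟨s, hs⟩
      simp only [Matrix.mulVec, dotProduct, hB, Pi.zero_apply] at e
      have : ∀ i ∈ (Finset.univ : Finset (Fin n)),
          (v i * ∏ j ∈ Finset.univ.erase i, U j) * (dl g)^[s] (P i * U i) =
          (∏ j, U j) * ((nab g (l i))^[s] (P i) * v i) := by
        intro i hi
        rw [dl_iter_eig (hU i), ← Finset.mul_prod_erase _ _ hi]; ring
      rw [Finset.sum_congr rfl this, ← Finset.mul_sum, e, mul_zero]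
  have hBU : ∀ s, (X - C a) ^ (k + 1 - n) ∣ (B.mulVec U) s := by
    intro s
    have := dl_iter_dvd g a _ k hd s
    rw [dl_iter_sum] at this
    have e : (B.mulVec U) s = ∑ i, (dl g)^[(s:ℕ)] (P i * U i) := by
      simp only [Matrix.mulVec, dotProduct, hB]
      exact Finset.sum_congr rfl fun i _ => (dl_iter_eig (hU i) _ _).symm
    rw [e]
    refine dvd_trans (pow_dvd_pow _ ?_) this
    have := s.2
    omega
  have hdd : (X - C a) ^ (k + 1 - n) ∣ B.det * U ⟨0, hn⟩ := by
    have e : B.adjugate.mulVec (B.mulVec U) = B.det • U := by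
      rw [Matrix.mulVec_mulVec, Matrix.adjugate_mul, Matrix.smul_mulVec, Matrix.one_mulVec]
    have e' := congrFun e ⟨0, hn⟩
    simp only [Pi.smul_apply, smul_eq_mul] at e'
    rw [← e']
    simp only [Matrix.mulVec, dotProduct]
    exact Finset.dvd_sum fun s _ => Dvd.dvd.mul_left (hBU s) _
  have hdd2 : (X - C a) ^ (k + 1 - n) ∣ B.det := by
    refine (IsCoprime.pow_left ?_).dvd_of_dvd_mul_right hdd
    rw [(irreducible_X_sub_C a).coprime_iff_not_dvd, dvd_iff_isRoot]
    exact ha _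
  have h1 := natDegree_le_of_dvd hdd2 hdet
  rw [natDegree_pow, natDegree_X_sub_C, mul_one] at h1
  have h2 := det_natDegree B (fun s => E + s * m) fun s i =>
    nab_iter_natDegree hgd (hl i) (hP i) s
  have h3 : ∑ s : Fin n, (E + (s:ℕ) * m) = n * E + (n * (n-1) / 2) * m := by
    rw [Fin.sum_univ_eq_sum_range (fun s => E + s * m) n, Finset.sum_add_distrib, ← Finset.sum_mul,
      Finset.sum_range_id]
    simp
  rw [h3] at h2
  have h4 : 2 * (n * (n-1) / 2) ≤ n * (n - 1) := Nat.mul_div_le _ _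
  obtain ⟨t, rfl⟩ : ∃ t, n = t + 1 := ⟨n - 1, by omega⟩
  simp only [Nat.add_sub_cancel] at h4 h2
  have h5 : k + 1 ≤ (t+1) + ((t+1) * E + ((t+1) * t / 2) * m) := by omega
  set z := (t+1) * t / 2
  nlinarith [Nat.zero_le m, Nat.zero_le t]

def Ind {F : Type*} [Field F] {ι : Type*} (I : Finset ι) (U : ι → F[X]) (E : ℕ) : Prop :=
  ∀ c P : ι → F[X], (∀ i ∈ I, derivative (c i) = 0) → (∀ i ∈ I, (P i).natDegree ≤ E) →
    ∑ i ∈ I, c i * (P i * U i) = 0 → ∀ i ∈ I, c i * P i = 0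

def Eig {F : Type*} [Field F] (g : F[X]) (m : ℕ) (f : F[X]) : Prop :=
  ∃ l : F[X], l.natDegree ≤ m ∧ dl g f = l * f

lemma Eig.mul {F : Type*} [Field F] {g : F[X]} {m : ℕ} {f₁ f₂ : F[X]} (h₁ : Eig g m f₁)
    (h₂ : Eig g m f₂) : Eig g m (f₁ * f₂) := by
  obtain ⟨l₁, d₁, e₁⟩ := h₁
  obtain ⟨l₂, d₂, e₂⟩ := h₂
  refine ⟨l₁ + l₂, natDegree_add_le_of_degree_le d₁ d₂, ?_⟩
  unfold dl at *
  rw [derivative_mul]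
  linear_combination f₂ * e₁ + f₁ * e₂

lemma Eig.one {F : Type*} [Field F] {g : F[X]} {m : ℕ} : Eig g m 1 :=
  ⟨0, by simp, by simp [dl]⟩

lemma Eig.pow {F : Type*} [Field F] {g : F[X]} {m : ℕ} {f : F[X]} (h : Eig g m f) (n : ℕ) :
    Eig g m (f ^ n) := by
  induction n with
  | zero => simpa using Eig.one
  | succ n ih => rw [pow_succ]; exact ih.mul h

lemma Eig.prod {F : Type*} [Field F] {g : F[X]} {m : ℕ} {ι : Type*} (S : Finset ι)
    (f : ι → F[X]) (h : ∀ i ∈ S, Eig g m (f i)) : Eig g m (∏ i ∈ S, f i) := by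
  classical
  induction S using Finset.induction_on with
  | empty => simpa using Eig.one
  | insert a s ha ih =>
    rw [Finset.prod_insert ha]
    exact (h a (by simp)).mul (ih fun i hi => h i (Finset.mem_insert_of_mem hi))

lemma Eig.lin {F : Type*} [Field F] {g : F[X]} {m : ℕ} (hg : g.natDegree ≤ m + 1) (hg0 : g ≠ 0)
    (a : F) (h : (X - C a) ∣ g) : Eig g m (X - C a) := by
  obtain ⟨l, rfl⟩ := h
  refine ⟨l, ?_, ?_⟩
  · rw [natDegree_mul (left_ne_zero_of_mul hg0) (right_ne_zero_of_mul hg0), natDegree_X_sub_C] at hg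
    omega
  · unfold dl
    simp [mul_comm]

lemma zero_est {F : Type*} [Field F] (p : ℕ) [Fact p.Prime] [CharP F p]
    {g : F[X]} (hg : g ≠ 0) {m E k : ℕ} (hgd : g.natDegree ≤ m + 1) {ι : Type*} [DecidableEq ι]
    (I : Finset ι) (U : ι → F[X]) (hU : ∀ i ∈ I, Eig g m (U i)) (hI : Ind I U E)
    (a : F) (ha : ∀ i ∈ I, (U i).eval a ≠ 0)
    (hk : 2 * (I.card * (E + 1)) + m * I.card * I.card ≤ 2 * k)
    (P : ι → F[X]) (hP : ∀ i ∈ I, (P i).natDegree ≤ E)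
    (hd : (X - C a) ^ k ∣ ∑ i ∈ I, P i * U i) : ∀ i ∈ I, P i = 0 := by
  classical
  set J := I.filter (fun i => P i ≠ 0) with hJ
  by_contra hcon
  push Not at hcon
  obtain ⟨i0, hi0, hPi0⟩ := hcon
  have hi0J : i0 ∈ J := by simp [hJ, hi0, hPi0]
  have hJI : J ⊆ I := Finset.filter_subset _ _
  have hsum : ∀ c : ι → F[X], ∑ i ∈ I, c i * (P i * U i) = ∑ i ∈ J, c i * (P i * U i) := by
    intro c
    symm
    refine Finset.sum_subset hJI fun i hi hi' => ?_
    have : P i = 0 := by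
      by_contra h
      exact hi' (by simp [hJ, hi, h])
    simp [this]
  set e := J.equivFin with he
  have hfin : ∀ f : ι → F[X], ∑ x : Fin J.card, f (e.symm x) = ∑ i ∈ J, f i := by
    intro f
    rw [Equiv.sum_comp e.symm (fun x : J => f x), Finset.sum_coe_sort]
  choose! l hl using hU
  have hmem : ∀ x : Fin J.card, ((e.symm x : J) : ι) ∈ I := fun x => hJI (e.symm x).2
  have hcard : J.card ≤ I.card := Finset.card_le_card hJI
  refine zero_est_fin p hg (m := m) (E := E) (k := k) (n := J.card) hgd
    (fun x => U (e.symm x)) (fun x => l (e.symm x)) (fun x => P (e.symm x))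
    (fun x => (hl _ (hmem x)).2) (fun x => (hl _ (hmem x)).1) (fun x => hP _ (hmem x)) a
    (fun x => ha _ (hmem x)) ?_ (Finset.card_pos.2 ⟨i0, hi0J⟩) ?_ ?_
  · intro c hc hs x
    set c' : ι → F[X] := fun i => if h : i ∈ J then c (e ⟨i, h⟩) else 0 with hc'
    have hc'x : ∀ x, c' (e.symm x) = c x := by
      intro x
      simp only [hc']
      rw [dif_pos (e.symm x).2]
      simp
    have := hI c' P ?_ hP ?_ _ (hmem x)
    · rw [hc'x] at this
      refine (mul_eq_zero.1 this).resolve_right ?_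
      exact (Finset.mem_filter.1 (e.symm x).2).2
    · intro i _
      simp only [hc']
      split_ifs
      · exact hc _
      · simp
    · rw [hsum, ← hfin (fun i => c' i * (P i * U i))]
      simp only [hc'x]
      exact hs
  · refine le_trans ?_ hk
    gcongr
  · rw [hfin (fun i => P i * U i)]
    have := hsum 1
    simp only [Pi.one_apply, one_mul] at this
    rw [← this]
    exact hd

lemma sep {F : Type*} [Field F] (a : F) {ι : Type*} [DecidableEq ι] (S : Finset ι) (w : ι → ℕ)
    (k : ℕ) (hw : ∀ s ∈ S, ∀ t ∈ S, s ≠ t → w s + k ≤ w t ∨ w t + k ≤ w s) (G : ι → F[X])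
    (hG : ∀ s ∈ S, (X - C a) ^ k ∣ G s → G s = 0)
    (h0 : ∑ s ∈ S, (X - C a) ^ (w s) * G s = 0) (hk : 0 < k) : ∀ s ∈ S, G s = 0 := by
  classical
  by_contra hcon
  push Not at hcon
  obtain ⟨s0, hs0, hne⟩ := hcon
  obtain ⟨s, hs, hmin⟩ := Finset.exists_min_image (S.filter fun s => G s ≠ 0) w
    ⟨s0, by simp [hs0, hne]⟩
  rw [Finset.mem_filter] at hs
  apply hs.2
  apply hG s hs.1
  rw [← Finset.add_sum_erase _ _ hs.1] at h0
  have hd : (X - C a) ^ (w s + k) ∣ ∑ t ∈ S.erase s, (X - C a) ^ (w t) * G t := by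
    refine Finset.dvd_sum fun t ht => ?_
    rw [Finset.mem_erase] at ht
    by_cases hz : G t = 0
    · simp [hz]
    · have := hmin t (by simp [ht.2, hz])
      have h2 := hw s hs.1 t ht.2 (Ne.symm ht.1)
      exact Dvd.dvd.mul_right (pow_dvd_pow _ (by omega)) _
  have hd2 : (X - C a) ^ (w s + k) ∣ (X - C a) ^ (w s) * G s := by
    rw [eq_neg_of_add_eq_zero_left h0]
    exact (dvd_neg).2 hd
  rw [pow_add] at hd2
  exact (mul_dvd_mul_iff_left (pow_ne_zero _ (X_sub_C_ne_zero a))).1 hd2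

lemma const_expand {F : Type*} [Field F] (p : ℕ) [Fact p.Prime] [CharP F p] (a : F) (c : F[X])
    (hc : derivative c = 0) : ∃ q : F[X], c = q.comp ((X - C a) ^ p) := by
  refine ⟨(contract p c).comp (X + C (a ^ p)), ?_⟩
  rw [comp_assoc]
  have : (X + C (a ^ p)).comp ((X - C a) ^ p) = X ^ p := by
    simp [sub_pow_char]
  rw [this, ← expand_eq_comp_X_pow]
  exact (expand_contract p hc (Fact.out : p.Prime).ne_zero).symm

noncomputable def UU {F : Type*} [Field F] (k : ℕ) (a : ℕ → F) (b : F) (φ : Finset ℕ → ℕ)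
    (S : Finset ℕ) : F[X] := (∏ i ∈ S, (X - C (a i)) ^ k) * (X - C b) ^ (φ S)

lemma UU_insert {F : Type*} [Field F] (k : ℕ) (a : ℕ → F) (b : F) (φ : Finset ℕ → ℕ)
    (S : Finset ℕ) (t : ℕ) (ht : t ∉ S) : UU k a b φ (insert t S) =
      (X - C (a t)) ^ k * UU k a b (fun S => φ (insert t S)) S := by
  unfold UU
  rw [Finset.prod_insert ht, mul_assoc]

lemma UU_eval {F : Type*} [Field F] (k : ℕ) (a : ℕ → F) (b : F) (φ : Finset ℕ → ℕ)
    (S : Finset ℕ) (x : F) (h : ∀ i ∈ S, x ≠ a i) (hb : x ≠ b) : (UU k a b φ S).eval x ≠ 0 := by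
  unfold UU
  rw [eval_mul, eval_prod]
  refine mul_ne_zero (Finset.prod_ne_zero_iff.2 fun i hi => ?_) ?_
  · simpa using fun h' => absurd (sub_eq_zero.1 h') (h i hi)
  · simpa using fun h' => absurd (sub_eq_zero.1 h') hb

lemma UU_eig {F : Type*} [Field F] {g : F[X]} {m : ℕ} (hg : g.natDegree ≤ m + 1) (hg0 : g ≠ 0)
    (k : ℕ) (a : ℕ → F) (b : F) (φ : Finset ℕ → ℕ)
    (S : Finset ℕ) (h : ∀ i ∈ S, (X - C (a i)) ∣ g) (hb : (X - C b) ∣ g) :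
    Eig g m (UU k a b φ S) := by
  unfold UU
  exact (Eig.prod _ _ fun i hi => (Eig.lin hg hg0 _ (h i hi)).pow _).mul
    ((Eig.lin hg hg0 _ hb).pow _)

lemma ind_zero {F : Type*} [Field F] (k : ℕ) (a : ℕ → F) (b : F) (φ : Finset ℕ → ℕ) (E : ℕ) :
    Ind (Finset.range 0).powerset (UU k a b φ) E := by
  intro c P _ _ hs i hi
  simp only [Finset.range_zero, Finset.powerset_empty, Finset.sum_singleton,
    Finset.mem_singleton] at hs hi
  subst hi
  rw [← mul_assoc] at hs
  refine (mul_eq_zero.1 hs).resolve_right ?_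
  unfold UU
  simpa using fun h => absurd h (X_sub_C_ne_zero b)

lemma ind_step {F : Type*} [Field F] (p : ℕ) [Fact p.Prime] [CharP F p]
    {g : F[X]} (hg : g ≠ 0) {m E k t : ℕ} (hgd : g.natDegree ≤ m + 1) (a : ℕ → F) (b : F)
    (hag : ∀ i < t, (X - C (a i)) ∣ g) (hbg : (X - C b) ∣ g)
    (hat : ∀ i < t, a t ≠ a i) (hbt : a t ≠ b) (hk0 : 0 < k) (hkp : 2 * k ≤ p)
    (hk : 2 * (2 ^ t * (E + 1)) + m * 2 ^ t * 2 ^ t ≤ 2 * k)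
    (ih : ∀ φ, Ind (Finset.range t).powerset (UU k a b φ) E) (φ : Finset ℕ → ℕ) :
    Ind (Finset.range (t+1)).powerset (UU k a b φ) E := by
  classical
  intro c P hc hP hs
  have hq : ∀ S : Finset ℕ, ∃ q : F[X], S ∈ (Finset.range (t+1)).powerset →
      c S = q.comp ((X - C (a t)) ^ p) := by
    intro S
    by_cases h : S ∈ (Finset.range (t+1)).powerset
    · obtain ⟨q, hq⟩ := const_expand p (a t) (c S) (hc S h)
      exact ⟨q, fun _ => hq⟩
    · exact ⟨0, fun h' => absurd h' h⟩
  choose q hq using hq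
  set N := (Finset.range (t+1)).powerset.sup (fun S => (q S).natDegree) + 1 with hN
  have hcs : ∀ S ∈ (Finset.range (t+1)).powerset,
      c S = ∑ j ∈ Finset.range N, C ((q S).coeff j) * (X - C (a t)) ^ (p * j) := by
    intro S hS
    have : (q S).natDegree < N := by
      have := Finset.le_sup (f := fun S => (q S).natDegree) hS
      omega
    rw [hq S hS, comp, eval₂_eq_sum_range' _ this]
    simp only [pow_mul]
  set T : ℕ → Finset ℕ → Finset ℕ := fun e S => if e = 0 then S else insert t S with hT
  have hTm : ∀ e, ∀ S ∈ (Finset.range t).powerset, T e S ∈ (Finset.range (t+1)).powerset := by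
    intro e S hS
    rw [Finset.mem_powerset] at *
    rw [Finset.range_add_one]
    simp only [hT]
    split_ifs
    · exact hS.trans (Finset.subset_insert _ _)
    · exact Finset.insert_subset_insert _ hS
  have htn : ∀ S ∈ (Finset.range t).powerset, t ∉ S := by
    intro S hS h
    have := Finset.mem_powerset.1 hS h
    simp at this
  have hUT : ∀ e ∈ Finset.range 2, ∀ S ∈ (Finset.range t).powerset, UU k a b φ (T e S) =
      (X - C (a t)) ^ (k * e) * UU k a b (fun S => φ (T e S)) S := by
    intro e he S hS
    have : e = 0 ∨ e = 1 := by have := Finset.mem_range.1 he; omega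
    rcases this with rfl | rfl
    · simp [hT]
    · simp only [hT, one_ne_zero, if_false, mul_one]
      exact UU_insert k a b φ S t (htn S hS)
  have hsplit : ∀ f : Finset ℕ → F[X], ∑ S ∈ (Finset.range (t+1)).powerset, f S =
      ∑ e ∈ Finset.range 2, ∑ S ∈ (Finset.range t).powerset, f (T e S) := by
    intro f
    rw [Finset.range_add_one, Finset.sum_powerset_insert (by simp), Finset.sum_range_succ,
      Finset.sum_range_one]
    simp [hT]
  set G : ℕ × ℕ → F[X] := fun je => ∑ S ∈ (Finset.range t).powerset,
    (C ((q (T je.2 S)).coeff je.1) * P (T je.2 S)) * UU k a b (fun S => φ (T je.2 S)) S with hG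
  have hz : ∀ je ∈ Finset.range N ×ˢ Finset.range 2, (X - C (a t)) ^ k ∣ G je →
      ∀ S ∈ (Finset.range t).powerset, C ((q (T je.2 S)).coeff je.1) * P (T je.2 S) = 0 := by
    intro je _ hd
    refine zero_est p hg (m := m) (E := E) (k := k) hgd (Finset.range t).powerset
      (UU k a b (fun S => φ (T je.2 S))) ?_ (ih _) (a t) ?_ ?_ _ ?_ hd
    · intro S hS
      exact UU_eig hgd hg _ _ _ _ _
        (fun i hi => hag i (Finset.mem_range.1 (Finset.mem_powerset.1 hS hi))) hbg
    · intro S hS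
      exact UU_eval _ _ _ _ _ _
        (fun i hi => hat i (Finset.mem_range.1 (Finset.mem_powerset.1 hS hi))) hbt
    · simpa using hk
    · intro S hS
      exact (natDegree_C_mul_le _ _).trans (hP _ (hTm _ _ hS))
  have hall : ∀ je ∈ Finset.range N ×ˢ Finset.range 2, G je = 0 := by
    refine sep (a t) _ (fun je => p * je.1 + k * je.2) k ?_ G ?_ ?_ hk0
    · rintro ⟨j, e⟩ h1 ⟨j', e'⟩ h2 hne
      simp only [Finset.mem_product, Finset.mem_range] at h1 h2
      obtain ⟨_, he⟩ := h1
      obtain ⟨_, he'⟩ := h2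
      simp only
      have H : ∀ j j' e e' : ℕ, e < 2 → e' < 2 → j < j' → p * j + k * e + k ≤ p * j' + k * e' := by
        intro j j' e e' he he' hj
        have : p * (j + 1) ≤ p * j' := Nat.mul_le_mul_left _ hj
        have : k * e ≤ k * 1 := Nat.mul_le_mul_left _ (by omega)
        nlinarith [Nat.zero_le (k * e')]
      rcases lt_trichotomy j j' with h | h | h
      · left; exact H _ _ _ _ he he' h
      · subst h
        have : e ≠ e' := fun h => hne (by rw [h])
        rcases lt_or_gt_of_ne this with h | h
        · left
          have : k * (e + 1) ≤ k * e' := Nat.mul_le_mul_left _ h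
          nlinarith
        · right
          have : k * (e' + 1) ≤ k * e := Nat.mul_le_mul_left _ h
          nlinarith
      · right; exact H _ _ _ _ he' he h
    · intro je hje hd
      have := hz je hje hd
      simp only [hG]
      exact Finset.sum_eq_zero fun S hS => by rw [this S hS, zero_mul]
    · rw [← hs, hsplit, Finset.sum_product_right]
      refine Finset.sum_congr rfl fun e he => ?_
      simp only [hG, Finset.mul_sum]
      rw [Finset.sum_comm]
      refine Finset.sum_congr rfl fun S hS => ?_
      rw [hcs _ (hTm e S hS), Finset.sum_mul]
      refine Finset.sum_congr rfl fun j _ => ?_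
      rw [hUT e he S hS, pow_add]
      ring
  have hfin : ∀ e ∈ Finset.range 2, ∀ S ∈ (Finset.range t).powerset,
      c (T e S) * P (T e S) = 0 := by
    intro e he S hS
    rw [hcs _ (hTm e S hS), Finset.sum_mul]
    refine Finset.sum_eq_zero fun j hj => ?_
    have hje : (j, e) ∈ Finset.range N ×ˢ Finset.range 2 := Finset.mem_product.2 ⟨hj, he⟩
    have := hz (j, e) hje (by rw [hall _ hje]; exact dvd_zero _) S hS
    simp only at this
    linear_combination (X - C (a t)) ^ (p * j) * this
  intro S hS
  by_cases htS : t ∈ S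
  · have := hfin 1 (by simp) (S.erase t) ?_
    · simpa [hT, Finset.insert_erase htS] using this
    · rw [Finset.mem_powerset] at *
      rw [Finset.range_add_one] at hS
      exact Finset.subset_insert_iff.1 hS
  · have := hfin 0 (by simp) S ?_
    · simpa [hT] using this
    · rw [Finset.mem_powerset] at *
      rw [Finset.range_add_one] at hS
      exact (Finset.subset_insert_iff_of_notMem htS).1 hS

lemma ind_all {F : Type*} [Field F] (p : ℕ) [Fact p.Prime] [CharP F p]
    {g : F[X]} (hg : g ≠ 0) {m E k u : ℕ} (hgd : g.natDegree ≤ m + 1) (a : ℕ → F) (b : F)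
    (hag : ∀ i < u, (X - C (a i)) ∣ g) (hbg : (X - C b) ∣ g)
    (hat : ∀ t < u, ∀ i < t, a t ≠ a i) (hbt : ∀ t < u, a t ≠ b) (hk0 : 0 < k) (hkp : 2 * k ≤ p)
    (hk : 2 * (2 ^ u * (E + 1)) + m * 2 ^ u * 2 ^ u ≤ 2 * k) : ∀ t ≤ u,
    ∀ φ, Ind (Finset.range t).powerset (UU k a b φ) E := by
  intro t
  induction t with
  | zero => intro _ φ; exact ind_zero _ _ _ _ _
  | succ t ih =>
    intro ht φ
    refine ind_step p hg hgd a b (fun i hi => hag i (by omega)) hbg (fun i hi => hat t ht i hi)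
      (hbt t ht) hk0 hkp ?_ (ih (by omega)) φ
    have : 2 ^ t ≤ 2 ^ u := Nat.pow_le_pow_right (by norm_num) (by omega)
    refine le_trans ?_ hk
    gcongr

lemma dl_iter_eval {F : Type*} [Field F] (g : F[X]) (x : F) (j : ℕ) : ∀ r : F[X],
    ((dl g)^[j] ((X - C x) ^ j * r)).eval x = (j.factorial : F) * (g.eval x) ^ j * r.eval x := by
  induction j with
  | zero => intro r; simp
  | succ j ih =>
    intro r
    rw [Function.iterate_succ_apply]
    have : dl g ((X - C x) ^ (j+1) * r) =
        (X - C x) ^ j * (((j:F[X]) + 1) * g * r + (X - C x) * (g * derivative r)) := by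
      unfold dl
      rw [derivative_mul, derivative_X_sub_C_pow]
      simp only [Nat.add_sub_cancel, Nat.cast_add, Nat.cast_one, C_add, C_1, map_natCast]
      ring
    rw [this, ih]
    simp only [eval_add, eval_mul, eval_sub, eval_X, eval_C, sub_self, zero_mul, add_zero,
      eval_natCast, eval_one, Nat.factorial_succ]
    push_cast
    ring

lemma vanish_order {F : Type*} [Field F] (p : ℕ) [Fact p.Prime] [CharP F p] (g f : F[X]) (x : F)
    (hx : g.eval x ≠ 0) (M : ℕ) (hM : M ≤ p) (h : ∀ s < M, ((dl g)^[s] f).eval x = 0) :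
    (X - C x) ^ M ∣ f := by
  have : ∀ j ≤ M, (X - C x) ^ j ∣ f := by
    intro j
    induction j with
    | zero => intro _; simp
    | succ j ih =>
      intro hj
      obtain ⟨r, hr⟩ := ih (by omega)
      have h1 := h j (by omega)
      rw [hr, dl_iter_eval] at h1
      have hf : (j.factorial : F) ≠ 0 := by
        rw [Ne, CharP.cast_eq_zero_iff F p, (Fact.out : p.Prime).dvd_factorial]
        omega
      have h2 : r.eval x = 0 := by
        refine (mul_eq_zero.1 h1).resolve_left (mul_ne_zero hf (pow_ne_zero _ hx))
      obtain ⟨r', hr'⟩ := dvd_iff_isRoot.2 h2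
      rw [hr, hr', pow_succ]
      exact mul_dvd_mul_left _ (Dvd.intro _ rfl)
  exact this M le_rfl

noncomputable def nabL {F : Type*} [Field F] (g l : F[X]) : F[X] →ₗ[F] F[X] where
  toFun := nab g l
  map_add' := by intro a b; unfold nab; rw [derivative_add]; ring
  map_smul' := by
    intro c a; unfold nab
    simp only [derivative_smul, RingHom.id_apply, smul_add, mul_smul_comm]

lemma nabL_pow {F : Type*} [Field F] (g l P : F[X]) (s : ℕ) :
    ((nabL g l) ^ s) P = (nab g l)^[s] P := by
  rw [Module.End.pow_apply]; rfl

lemma natDegree_of_mem {F : Type*} [Field F] {E : ℕ} {P : F[X]} (h : P ∈ degreeLT F (E+1)) :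
    P.natDegree ≤ E := by
  by_cases h0 : P = 0
  · simp [h0]
  · have := (natDegree_lt_iff_degree_lt h0).2 (mem_degreeLT.1 h)
    omega

/-- Siegel-type lemma. -/
lemma siegel {F : Type*} [Field F] {g : F[X]} {m E M : ℕ} (hgd : g.natDegree ≤ m + 1)
    {ι : Type*} [DecidableEq ι] (I : Finset ι) (l : ι → F[X]) (hl : ∀ i ∈ I, (l i).natDegree ≤ m)
    (hM : 2 * (M * (E + 1)) + m * M * M < 2 * (I.card * (E + 1))) :
    ∃ P : ι → F[X], (∀ i, (P i).natDegree ≤ E) ∧ (∃ i ∈ I, P i ≠ 0) ∧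
      ∀ s < M, ∑ i ∈ I, (nab g (l i))^[s] (P i) = 0 := by
  classical
  let Φ : (I → degreeLT F (E+1)) →ₗ[F] ((s : Fin M) → (Fin (E + 1 + s * m) → F)) :=
    LinearMap.pi fun s => LinearMap.pi fun j => (lcoeff F j) ∘ₗ
      ∑ i : I, ((nabL g (l i)) ^ (s : ℕ)) ∘ₗ (degreeLT F (E+1)).subtype ∘ₗ LinearMap.proj i
  have : FiniteDimensional F (degreeLT F (E+1)) :=
    (degreeLTEquiv F (E+1)).symm.finiteDimensional
  have hfr : Module.finrank F (degreeLT F (E+1)) = E + 1 := by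
    rw [(degreeLTEquiv F (E+1)).finrank_eq]; simp
  have hker : LinearMap.ker Φ ≠ ⊥ := by
    apply LinearMap.ker_ne_bot_of_finrank_lt
    rw [Module.finrank_pi_fintype, Module.finrank_pi_fintype]
    simp only [Module.finrank_fin_fun, hfr, Finset.sum_const, Finset.card_univ, Fintype.card_coe,
      smul_eq_mul]
    rw [Fin.sum_univ_eq_sum_range (fun s => E + 1 + s * m) M, Finset.sum_add_distrib,
      ← Finset.sum_mul, Finset.sum_range_id]
    simp only [Finset.sum_const, Finset.card_range, smul_eq_mul]
    have h4 : 2 * (M * (M-1) / 2) ≤ M * (M - 1) := Nat.mul_div_le _ _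
    have h5 : M * (M-1) ≤ M * M := Nat.mul_le_mul_left _ (Nat.sub_le _ _)
    set z := M * (M-1) / 2
    nlinarith [Nat.zero_le m]
  obtain ⟨v, hv, hv0⟩ := (Submodule.ne_bot_iff _).1 hker
  refine ⟨fun i => if h : i ∈ I then (v ⟨i, h⟩ : F[X]) else 0, ?_, ?_, ?_⟩
  · intro i
    by_cases h : i ∈ I
    · simp only [h, dif_pos]
      exact natDegree_of_mem (v ⟨i, h⟩).2
    · simp [h]
  · by_contra hcon
    push Not at hcon
    apply hv0
    funext i
    have := hcon i.1 i.2
    simpa using this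
  · intro s hs
    rw [← Finset.sum_coe_sort]
    have e : ∀ i : I, (nab g (l i))^[s] (if h : (i:ι) ∈ I then (v ⟨i, h⟩ : F[X]) else 0) =
        (nab g (l i))^[s] (v i : F[X]) := by
      intro i; simp
    rw [Finset.sum_congr rfl fun i _ => e i]
    ext j
    rw [coeff_zero]
    by_cases hj : j < E + 1 + s * m
    · have := congrFun (congrFun (LinearMap.mem_ker.1 hv) ⟨s, hs⟩) ⟨j, hj⟩
      simpa [Φ, nabL_pow] using this
    · apply coeff_eq_zero_of_natDegree_lt
      have : (∑ i : I, (nab g (l i))^[s] (v i : F[X])).natDegree ≤ E + s * m :=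
        natDegree_sum_le_of_forall_le _ _ fun i _ =>
          nab_iter_natDegree hgd (hl _ i.2) (natDegree_of_mem (v i).2) s
      omega

lemma stepanov {F : Type*} [Field F] (p : ℕ) [Fact p.Prime] [CharP F p]
    (k d u E M R : ℕ) (hk0 : 0 < k) (hd : 0 < d) (hkp : 2 * k ≤ p) (a : ℕ → F)
    (ha : ∀ i < u + 2, ∀ j < u + 2, i ≠ j → a i ≠ a j)
    (hk : 2 * (2 ^ u * (E + 1)) + (u + 1) * 2 ^ u * 2 ^ u ≤ 2 * k)
    (hMp : M ≤ p) (hM : 2 * (M * (E + 1)) + (u + 1) * M * M < 2 * (2 ^ u * R * (E + 1)))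
    (A : Finset F) (hA0 : ∀ x ∈ A, ∀ i < u + 2, x ≠ a i)
    (hA : ∀ x ∈ A, ∃ c : F, c ^ d = 1 ∧ ∀ i < u + 2, (x - a i) ^ k = c) :
    A.card * M ≤ E + k * u + k * R + k * d := by
  classical
  set g : F[X] := ∏ i ∈ Finset.range (u+2), (X - C (a i)) with hgdef
  have hg : g ≠ 0 := Finset.prod_ne_zero_iff.2 fun i _ => X_sub_C_ne_zero _
  have hgd : g.natDegree ≤ (u + 1) + 1 := by
    rw [hgdef, natDegree_prod _ _ fun i _ => X_sub_C_ne_zero _]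
    simp
  have hag : ∀ i < u + 2, (X - C (a i)) ∣ g := fun i hi =>
    Finset.dvd_prod_of_mem _ (Finset.mem_range.2 hi)
  set b := a (u+1) with hb
  set ψ : ℕ → Finset ℕ → ℕ := fun e S => d - (S.card + e) % d with hψ
  set φ : ℕ → Finset ℕ → ℕ := fun e S => k * ψ e S with hφ
  set U : Finset ℕ × ℕ → F[X] := fun i => UU k a b (φ i.2) i.1 * (X - C (a u)) ^ (k * i.2) with hU
  set I : Finset (Finset ℕ × ℕ) := (Finset.range u).powerset ×ˢ Finset.range R with hI
  have hUe : ∀ e, ∀ S ∈ (Finset.range u).powerset, Eig g (u+1) (UU k a b (φ e) S) := by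
    intro e S hS
    refine UU_eig hgd hg _ _ _ _ _ (fun i hi => hag i ?_) (hag _ (by omega))
    have := Finset.mem_range.1 (Finset.mem_powerset.1 hS hi)
    omega
  have hUeig : ∀ i ∈ I, Eig g (u+1) (U i) := by
    intro i hi
    rw [hI, Finset.mem_product] at hi
    exact (hUe _ _ hi.1).mul ((Eig.lin hgd hg _ (hag _ (by omega))).pow _)
  choose! l hl using hUeig
  obtain ⟨P, hPd, ⟨i0, hi0, hPi0⟩, hPs⟩ := siegel (M := M) (E := E) hgd I l (fun i hi => (hl i hi).1)
    (by simpa [hI, Finset.card_product] using hM)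
  set f := ∑ i ∈ I, P i * U i with hf
  have hind := ind_all p hg (m := u+1) (E := E) (k := k) (u := u) hgd a b
    (fun i hi => hag i (by omega)) (hag _ (by omega))
    (fun t ht i hi => ha t (by omega) i (by omega) (by omega))
    (fun t ht => ha t (by omega) (u+1) (by omega) (by omega)) hk0 hkp hk u le_rfl
  -- `f` is nonzero
  have hf0 : f ≠ 0 := by
    intro hf0
    set G : ℕ → F[X] := fun e => ∑ S ∈ (Finset.range u).powerset, P (S, e) * UU k a b (φ e) S with hG
    have hz : ∀ e, (X - C (a u)) ^ k ∣ G e → ∀ S ∈ (Finset.range u).powerset, P (S, e) = 0 := by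
      intro e hdv
      refine zero_est p hg (m := u+1) (E := E) (k := k) hgd (Finset.range u).powerset
        (UU k a b (φ e)) (hUe e) (hind _) (a u) ?_ ?_ (fun S => P (S, e)) (fun S _ => hPd _) hdv
      · intro S hS
        refine UU_eval _ _ _ _ _ _ (fun i hi => ?_) (ha u (by omega) (u+1) (by omega) (by omega))
        have := Finset.mem_range.1 (Finset.mem_powerset.1 hS hi)
        exact ha u (by omega) i (by omega) (by omega)
      · simpa using hk
    have hGz : ∀ e ∈ Finset.range R, G e = 0 := by
      refine sep (a u) (Finset.range R) (fun e => k * e) k ?_ G ?_ ?_ hk0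
      · intro s _ t _ hst
        rcases lt_or_gt_of_ne hst with h | h
        · left
          have : k * (s + 1) ≤ k * t := Nat.mul_le_mul_left _ h
          simpa [Nat.mul_succ] using this
        · right
          have : k * (t + 1) ≤ k * s := Nat.mul_le_mul_left _ h
          simpa [Nat.mul_succ] using this
      · intro e _ hdv
        exact Finset.sum_eq_zero fun S hS => by rw [hz e hdv S hS, zero_mul]
      · rw [← hf0, hf, hI, Finset.sum_product_right]
        refine Finset.sum_congr rfl fun e _ => ?_
        simp only [hG, hU, Finset.mul_sum]
        exact Finset.sum_congr rfl fun S _ => by ring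
    rw [hI, Finset.mem_product] at hi0
    exact hPi0 (hz i0.2 (by rw [hGz _ hi0.2]; exact dvd_zero _) i0.1 hi0.1)
  -- values on `A`
  have hU1 : ∀ x ∈ A, ∀ i ∈ I, (U i).eval x = 1 := by
    intro x hx i hi
    obtain ⟨c, hc, hci⟩ := hA x hx
    rw [hI, Finset.mem_product] at hi
    simp only [hU, UU, eval_mul, eval_prod, eval_pow, eval_sub, eval_X, eval_C, hφ, pow_mul]
    rw [hci u (by omega), hb, hci (u+1) (by omega)]
    rw [Finset.prod_congr rfl (g := fun _ => c) fun j hj => hci j (by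
      have := Finset.mem_range.1 (Finset.mem_powerset.1 hi.1 hj)
      omega)]
    rw [Finset.prod_const, ← pow_add, ← pow_add]
    have : d ∣ i.1.card + ψ i.2 i.1 + i.2 := by
      simp only [hψ]
      have h1 := Nat.mod_add_div (i.1.card + i.2) d
      have h2 := Nat.mod_lt (i.1.card + i.2) hd
      refine ⟨(i.1.card + i.2) / d + 1, ?_⟩
      rw [Nat.mul_succ]
      omega
    obtain ⟨q, hq⟩ := this
    rw [hq, pow_mul, hc, one_pow]
  have hvan : ∀ x ∈ A, (X - C x) ^ M ∣ f := by
    intro x hx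
    refine vanish_order p g f x ?_ M hMp ?_
    · rw [hgdef, eval_prod]
      refine Finset.prod_ne_zero_iff.2 fun i hi => ?_
      simpa using fun h => absurd (sub_eq_zero.1 h) (hA0 x hx i (Finset.mem_range.1 hi))
    · intro s hs
      rw [hf, dl_iter_sum]
      have e : ∀ i ∈ I, (dl g)^[s] (P i * U i) = (nab g (l i))^[s] (P i) * U i := fun i hi =>
        dl_iter_eig (hl i hi).2 _ _
      rw [Finset.sum_congr rfl e, eval_finsetSum]
      have e2 : ∀ i ∈ I, ((nab g (l i))^[s] (P i) * U i).eval x = ((nab g (l i))^[s] (P i)).eval x :=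
        fun i hi => by rw [eval_mul, hU1 x hx i hi, mul_one]
      rw [Finset.sum_congr rfl e2, ← eval_finsetSum, hPs s hs, eval_zero]
  have hprod : (∏ x ∈ A, (X - C x) ^ M) ∣ f := by
    refine Finset.prod_dvd_of_coprime ?_ hvan
    intro x _ y _ hxy
    exact (isCoprime_X_sub_C_of_isUnit_sub (sub_ne_zero.2 hxy).isUnit).pow
  have hdeg := natDegree_le_of_dvd hprod hf0
  rw [natDegree_prod _ _ fun i _ => pow_ne_zero _ (X_sub_C_ne_zero _)] at hdeg
  simp only [natDegree_pow, natDegree_X_sub_C, mul_one, Finset.sum_const, smul_eq_mul] at hdeg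
  refine hdeg.trans ?_
  rw [hf]
  refine natDegree_sum_le_of_forall_le _ _ fun i hi => ?_
  rw [hI, Finset.mem_product, Finset.mem_powerset, Finset.mem_range] at hi
  refine natDegree_mul_le.trans ?_
  have h1 : (UU k a b (φ i.2) i.1).natDegree ≤ k * u + k * d := by
    unfold UU
    refine natDegree_mul_le.trans ?_
    refine add_le_add ?_ ?_
    · refine (natDegree_prod_le _ _).trans ?_
      simp only [natDegree_pow, natDegree_X_sub_C, mul_one, Finset.sum_const, smul_eq_mul]
      rw [mul_comm]
      have := Finset.card_le_card hi.1
      rw [Finset.card_range] at this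
      exact Nat.mul_le_mul_left _ this
    · rw [natDegree_pow, natDegree_X_sub_C, mul_one]
      exact Nat.mul_le_mul_left _ (Nat.sub_le _ _)
  have h2 : (U i).natDegree ≤ k * u + k * d + k * R := by
    refine natDegree_mul_le.trans ?_
    refine add_le_add h1 ?_
    rw [natDegree_pow, natDegree_X_sub_C, mul_one]
    exact Nat.mul_le_mul_left _ hi.2.le
  have := hPd i
  omega

lemma cast_ne_of_lt (p : ℕ) [Fact p.Prime] (h : ℕ) (hh : h ≤ p) (i j : ℕ) (hi : i < h) (hj : j < h)
    (hij : i ≠ j) : (-((i:ZMod p) + 1)) ≠ -((j:ZMod p) + 1) := by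
  intro e
  have e' : (i : ZMod p) = (j : ZMod p) := by linear_combination -e
  rw [ZMod.natCast_eq_natCast_iff, Nat.ModEq, Nat.mod_eq_of_lt (by omega),
    Nat.mod_eq_of_lt (by omega)] at e'
  exact hij e'

lemma A_small (p : ℕ) [Fact p.Prime] (k : ℕ) (hk : 0 < k) (A : Finset (ZMod p))
    (hA : ∀ x ∈ A, ∀ i : ℕ, i < 2 → x + ((i:ZMod p) + 1) ≠ 0 ∧ (x + ((i:ZMod p) + 1)) ^ k = (x + 1) ^ k) :
    A.card ≤ k := by
  set f : (ZMod p)[X] := (X + C 2) ^ k - (X + C 1) ^ k with hf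
  have hf0 : f ≠ 0 := by
    intro h
    have : f.eval (-1) = 0 := by rw [h]; simp
    have h2 : (-1 + 2 : ZMod p) = 1 := by ring
    simp [hf, h2, hk.ne'] at this
  have hd : f.natDegree ≤ k := by
    refine (natDegree_sub_le _ _).trans ?_
    simp only [natDegree_pow, natDegree_X_add_C, mul_one, max_self, le_refl]
  have hsub : A ⊆ f.roots.toFinset := by
    intro x hx
    rw [Multiset.mem_toFinset, mem_roots hf0, IsRoot.def]
    have := (hA x hx 1 (by norm_num)).2
    simp only [Nat.cast_one] at this
    simp only [hf, eval_sub, eval_pow, eval_add, eval_X, eval_C]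
    rw [← this]
    ring
  calc A.card ≤ f.roots.toFinset.card := Finset.card_le_card hsub
    _ ≤ Multiset.card f.roots := Multiset.toFinset_card_le _
    _ ≤ f.natDegree := card_roots' _
    _ ≤ k := hd

lemma exists_u (k : ℕ) (hk : 1 ≤ k) : ∃ u, (u + 1) * 4 ^ u ≤ k ∧ k < (u + 2) * 4 ^ (u + 1) := by
  refine ⟨Nat.findGreatest (fun u => (u+1) * 4 ^ u ≤ k) k, ?_, ?_⟩
  · exact Nat.findGreatest_spec (P := fun u => (u+1) * 4 ^ u ≤ k) (Nat.zero_le k) (by simpa using hk)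
  · set u := Nat.findGreatest (fun u => (u+1) * 4 ^ u ≤ k) k with hu
    by_cases h : u + 1 ≤ k
    · have := Nat.findGreatest_is_greatest (P := fun u => (u+1) * 4 ^ u ≤ k) (n := k) (k := u+1)
        (by omega) h
      simpa using this
    · have : 1 ≤ 4 ^ (u+1) := Nat.one_le_pow _ _ (by norm_num)
      nlinarith

set_option maxHeartbeats 2000000 in
lemma M_cond (p k d u D M : ℕ) (hp : 10 ^ 19 ≤ p) (hkd : k * d = p - 1) (hkk : p ≤ k * k)
    (hu13 : 13 ≤ u) (h1 : (u + 1) * 4 ^ u ≤ k) (h2 : k < (u + 2) * 4 ^ (u + 1))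
    (hD : D = k / (2 * 2 ^ u)) (hM : M * M ≤ p / 2) (hk2 : 2 * k ≤ p) :
    2 * (M * D) + (u + 1) * M * M < 2 * (2 ^ u * (d * (u + 1)) * D) := by
  have h4 : (4:ℕ) ^ u = 2 ^ u * 2 ^ u := (mul_pow 2 2 u)
  rw [pow_succ, h4] at h2
  rw [h4] at h1
  set n := 2 ^ u with hn
  have hn0 : 0 < n := by positivity
  have hD1 : D * (2 * n) ≤ k := by rw [hD]; exact Nat.div_mul_le_self _ _
  have hD2 : k < D * (2 * n) + 2 * n := by
    rw [hD]; have := Nat.lt_div_mul_add (a := k) (b := 2 * n) (by omega); exact this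
  -- move to reals
  have hpR : (10:ℝ) ^ 19 ≤ p := by exact_mod_cast hp
  have hkdR : (k:ℝ) * d = p - 1 := by
    rw [← Nat.cast_mul, hkd, Nat.cast_sub (by omega)]; simp
  have hkkR : (p:ℝ) ≤ k * k := by exact_mod_cast hkk
  have h1R : ((u:ℝ) + 1) * (n * n) ≤ k := by exact_mod_cast h1
  have h2R : (k:ℝ) < (u + 2) * (n * n * 4) := by exact_mod_cast h2
  have hD1R : (D:ℝ) * (2 * n) ≤ k := by exact_mod_cast hD1
  have hD2R : (k:ℝ) < D * (2 * n) + 2 * n := by exact_mod_cast hD2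
  have hMR : (M:ℝ) * M ≤ p / 2 := by
    have : M * M * 2 ≤ p := by omega
    have : (M:ℝ) * M * 2 ≤ p := by exact_mod_cast this
    linarith
  have hk2R : 2 * (k:ℝ) ≤ p := by exact_mod_cast hk2
  have huR : (13:ℝ) ≤ u := by exact_mod_cast hu13
  have hnR : (1:ℝ) ≤ n := by exact_mod_cast hn0
  have hD0 : (0:ℝ) ≤ D := by positivity
  have hM0 : (0:ℝ) ≤ M := by positivity
  have hd0 : (0:ℝ) ≤ d := by positivity
  have hk0 : (0:ℝ) < k := by
    by_contra h
    have : (k:ℝ) = 0 := le_antisymm (not_lt.1 h) (by positivity)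
    rw [this] at hkkR; norm_num at hkkR; linarith
  have goalR : 2 * ((M:ℝ) * D) + (u + 1) * M * M < 2 * (n * (d * (u + 1)) * D) := by
    -- D² ≤ (u+2) k
    have hDD : (D:ℝ) * D ≤ (u + 2) * k := by
      have a1 : (D:ℝ) ≤ 2 * (u + 2) * n := by
        by_contra h
        push Not at h
        have : 2 * ((u:ℝ) + 2) * n * (2 * n) < D * (2 * n) := by
          apply mul_lt_mul_of_pos_right h; linarith
        nlinarith
      calc (D:ℝ) * D ≤ D * (2 * (u+2) * n) := mul_le_mul_of_nonneg_left a1 hD0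
        _ = (u + 2) * (D * (2 * n)) := by ring
        _ ≤ (u + 2) * k := mul_le_mul_of_nonneg_left hD1R (by linarith)
    have hMD : 2 * ((M:ℝ) * D) ≤ 0.28 * (u + 1) * p := by
      apply abs_le_of_sq_le_sq' _ (by positivity) |>.2
      have a1 : (M:ℝ) * M * (D * D) ≤ p / 2 * ((u + 2) * k) :=
        mul_le_mul hMR hDD (by positivity) (by positivity)
      have a2 : (p:ℝ) / 2 * ((u + 2) * k) ≤ p / 2 * ((u + 2) * (p / 2)) := by
        apply mul_le_mul_of_nonneg_left _ (by positivity)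
        apply mul_le_mul_of_nonneg_left _ (by positivity)
        linarith
      have a3 : ((u:ℝ) + 2) ≤ (0.28 * (u + 1)) ^ 2 := by nlinarith
      calc (2 * ((M:ℝ) * D)) ^ 2 = 4 * (M * M * (D * D)) := by ring
        _ ≤ 4 * (p / 2 * ((u + 2) * (p / 2))) := by linarith
        _ = (u + 2) * p ^ 2 := by ring
        _ ≤ (0.28 * (u + 1)) ^ 2 * p ^ 2 := mul_le_mul_of_nonneg_right a3 (by positivity)
        _ = (0.28 * (u + 1) * p) ^ 2 := by ring
    have hMM : ((u:ℝ) + 1) * M * M ≤ 0.5 * (u + 1) * p := by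
      have := mul_le_mul_of_nonneg_left hMR (by linarith : (0:ℝ) ≤ u + 1)
      linarith
    -- d ≤ k
    have hdk : (d:ℝ) ≤ k := by
      by_contra h
      push Not at h
      have : (k:ℝ) * k < k * d := mul_lt_mul_of_pos_left h hk0
      linarith
    have hd4 : (d:ℝ) * 40000 ≤ p := by
      have q1 : (d:ℝ) * d ≤ p := by
        have := mul_le_mul_of_nonneg_right hdk hd0
        linarith
      apply abs_le_of_sq_le_sq' _ (by positivity) |>.2
      have q2 : (p:ℝ) * 10 ^ 19 ≤ p * p := mul_le_mul_of_nonneg_left hpR (by positivity)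
      have q3 : (0:ℝ) ≤ p := by positivity
      calc ((d:ℝ) * 40000) ^ 2 = (d * d) * 1600000000 := by ring
        _ ≤ p * 1600000000 := by linarith
        _ ≤ p * 10 ^ 19 := by linarith
        _ ≤ p ^ 2 := by linarith
    have hnd : 2 * ((n:ℝ) * d) ≤ 0.01 * p := by
      apply abs_le_of_sq_le_sq' _ (by positivity) |>.2
      have a0 : (n:ℝ) * n ≤ k := by
        have : 0 ≤ (u:ℝ) * (n * n) := by positivity
        linarith
      have a1 : (n:ℝ) * n * (d * d) ≤ k * (d * d) := mul_le_mul_of_nonneg_right a0 (by positivity)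
      have a2 : (k:ℝ) * (d * d) ≤ p * d := by
        have : (k:ℝ) * (d * d) = (p - 1) * d := by rw [← hkdR]; ring
        rw [this]; linarith
      have a3 : (p:ℝ) * (d * 40000) ≤ p * p := mul_le_mul_of_nonneg_left hd4 (by positivity)
      calc (2 * ((n:ℝ) * d)) ^ 2 = 4 * (n * n * (d * d)) := by ring
        _ ≤ 4 * (p * d) := by linarith
        _ ≤ 0.0001 * (p * p) := by linarith
        _ = (0.01 * p) ^ 2 := by ring
    have hmain : ((k:ℝ) - 2 * n) * (d * (u + 1)) ≤ 2 * (n * (d * (u + 1)) * D) := by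
      have q : 0 ≤ (d:ℝ) * (u+1) := by positivity
      have := mul_le_mul_of_nonneg_right (by linarith : (k:ℝ) - 2 * n ≤ D * (2 * n)) q
      linarith
    have hexp : ((k:ℝ) - 2 * n) * (d * (u + 1)) = (p - 1 - 2 * (n * d)) * (u + 1) := by
      rw [← hkdR]; ring
    rw [hexp] at hmain
    have : 0.78 * ((u:ℝ)+1) * p < (p - 1 - 2 * (n * d)) * (u + 1) := by
      have q : 0.78 * (p:ℝ) < p - 1 - 2 * (n * d) := by linarith
      have := mul_lt_mul_of_pos_right q (by linarith : (0:ℝ) < u + 1)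
      linarith
    linarith
  exact_mod_cast goalR

set_option maxHeartbeats 2000000 in
lemma A_bound (p : ℕ) [Fact p.Prime] (hp : 10 ^ 19 ≤ p) (k d : ℕ) (hkd : k * d = p - 1)
    (hd : 2 ≤ d) : ∃ h : ℕ, 2 ≤ h ∧ (h : ℝ) ≤ 0.722 * Real.log p ∧ ∀ A : Finset (ZMod p),
      (∀ x ∈ A, ∀ i : ℕ, i < h → x + ((i:ZMod p) + 1) ≠ 0 ∧ (x + ((i:ZMod p) + 1)) ^ k = (x + 1) ^ k) →
      (A.card : ℝ) ≤ 1.56 * Real.log p * √p := by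
  have hpR : (10:ℝ) ^ 19 ≤ p := by exact_mod_cast hp
  have hsq : √(p:ℝ) * √p = p := Real.mul_self_sqrt (by positivity)
  have hs0 : (10:ℝ) ^ 9 ≤ √p := by
    apply Real.le_sqrt_of_sq_le; norm_num at hpR ⊢; linarith
  have hlog2 := Real.log_two_gt_d9
  have hL : 43 ≤ Real.log p := by
    have : Real.log ((2:ℝ) ^ 63) ≤ Real.log p := Real.log_le_log (by positivity) (by norm_num at hpR ⊢; linarith)
    rw [Real.log_pow] at this
    push_cast at this
    linarith
  have hk0 : 0 < k := by
    rcases Nat.eq_zero_or_pos k with h | h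
    · rw [h] at hkd; omega
    · exact h
  by_cases hkk : p ≤ k * k
  · obtain ⟨u, h1, h2⟩ := exists_u k hk0
    have hk9 : 10 ^ 9 < k := by
      by_contra h
      push Not at h
      have := Nat.mul_le_mul h h
      omega
    have hu13 : 13 ≤ u := by
      by_contra h
      have hu : u ≤ 12 := by omega
      have : (u + 2) * 4 ^ (u+1) ≤ (12 + 2) * 4 ^ (12 + 1) :=
        Nat.mul_le_mul (by omega) (Nat.pow_le_pow_right (by norm_num) (by omega))
      norm_num at this
      omega
    have hk2 : 2 * k ≤ p := by
      have : k * 2 ≤ k * d := Nat.mul_le_mul_left _ hd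
      omega
    have h4 : (4:ℕ) ^ u = 2 ^ u * 2 ^ u := (mul_pow 2 2 u)
    have hpow : 4 ^ (u + 2) ≤ p := by
      have : 14 * 4 ^ u ≤ (u + 1) * 4 ^ u := Nat.mul_le_mul_right _ (by omega)
      rw [pow_add]
      omega
    have hhL : ((u + 2 : ℕ) : ℝ) ≤ 0.722 * Real.log p := by
      have a1 : ((4:ℝ) ^ (u+2)) ≤ p := by exact_mod_cast hpow
      have a2 := Real.log_le_log (by positivity) a1
      rw [Real.log_pow, show (4:ℝ) = 2 ^ 2 by norm_num, Real.log_pow] at a2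
      push_cast at a2 ⊢
      have : (0:ℝ) ≤ u + 2 := by positivity
      nlinarith
    have hup : u + 2 ≤ p := by
      have := Nat.lt_pow_self (n := u + 2) (a := 4) (by norm_num)
      exact this.le.trans hpow
    refine ⟨u + 2, by omega, hhL, ?_⟩
    intro A hA
    set D := k / (2 * 2 ^ u) with hD
    set M := Nat.sqrt (p / 2) with hM
    have hMM : M * M ≤ p / 2 := Nat.sqrt_le _
    have hMM2 : p / 2 < (M + 1) * (M + 1) := Nat.lt_succ_sqrt _
    have hn0 : 0 < 2 ^ u := by positivity
    have h2n : 2 * 2 ^ u ≤ k := by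
      have : 2 ≤ (u + 1) * 2 ^ u := by nlinarith
      have : 2 * 2 ^ u ≤ ((u + 1) * 2 ^ u) * 2 ^ u := Nat.mul_le_mul_right _ this
      rw [h4] at h1
      rw [mul_assoc] at this
      omega
    have hDpos : 1 ≤ D := by
      rw [hD, Nat.le_div_iff_mul_le (by positivity)]; omega
    have hDk : D * (2 * 2 ^ u) ≤ k := Nat.div_mul_le_self _ _
    have hD1 : D - 1 + 1 = D := by omega
    have hMp : M ≤ p := by
      have : M ≤ p / 2 := Nat.sqrt_le_self _
      omega
    have key := stepanov p k d u (D - 1) M (d * (u+1)) hk0 (by omega) hk2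
      (fun i => -((i:ZMod p) + 1))
      (fun i hi j hj hij => cast_ne_of_lt p (u+2) hup i j hi hj hij)
      (by
        rw [hD1]; rw [h4] at h1
        nlinarith)
      hMp
      (by rw [hD1]; exact M_cond p k d u D M hp hkd hkk hu13 h1 h2 hD hMM hk2) A
      (by
        intro x hx i hi e
        apply (hA x hx i hi).1
        rw [e]; ring)
      (by
        intro x hx
        refine ⟨(x + 1) ^ k, ?_, ?_⟩
        · rw [← pow_mul, hkd]
          have := (hA x hx 0 (by omega)).1
          simp only [Nat.cast_zero, zero_add] at this
          exact ZMod.pow_card_sub_one_eq_one this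
        · intro i hi
          have := (hA x hx i hi).2
          rw [← this]
          congr 1
          ring)
    have hb : A.card * M * 2 ≤ 3 * (u + 2) * p := by
      have e1 : k * (d * (u + 1)) = (p - 1) * (u + 1) := by rw [← mul_assoc, hkd]
      rw [e1, hkd] at key
      have e2 : (p - 1) * (u+1) ≤ p * (u+1) := Nat.mul_le_mul_right _ (by omega)
      have e3 : 2 * (k * u) ≤ p * u := by nlinarith
      have e4 : D ≤ k := Nat.div_le_self _ _
      nlinarith
    have hM7 : 0.7 * √p ≤ M := by
      have a1 : (p:ℝ) / 2 < (M + 1) * (M + 1) := by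
        have : p < 2 * ((M + 1) * (M + 1)) := by omega
        have : (p:ℝ) < 2 * ((M + 1) * (M + 1)) := by exact_mod_cast this
        linarith
      by_contra h
      push Not at h
      have hM0 : (0:ℝ) ≤ M := by positivity
      have q1 : ((M:ℝ) + 1) * (M + 1) ≤ (0.7 * √p + 1) * (0.7 * √p + 1) :=
        mul_self_le_mul_self (by linarith) (by linarith)
      have q2 : (10:ℝ) ^ 9 * √p ≤ √p * √p := mul_le_mul_of_nonneg_right hs0 (by positivity)
      have q3 : (0.7 * √(p:ℝ) + 1) * (0.7 * √p + 1) = 0.49 * (√p * √p) + 1.4 * √p + 1 := by ring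
      rw [q3] at q1
      linarith
    have hbR : (A.card:ℝ) * M * 2 ≤ 3 * (u + 2) * p := by exact_mod_cast hb
    push_cast at hhL
    have c0 : (0:ℝ) ≤ A.card := by positivity
    have c1 : (A.card:ℝ) * (0.7 * √p) * 2 ≤ 3 * (0.722 * Real.log p) * (√p * √p) := by
      rw [hsq]
      calc (A.card:ℝ) * (0.7 * √p) * 2 ≤ A.card * M * 2 := by gcongr
        _ ≤ 3 * (u+2) * p := hbR
        _ ≤ _ := by gcongr
    have c2 : (A.card:ℝ) * 1.4 * √p ≤ (2.166 * Real.log p * √p) * √p := by linarith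
    have c3 := le_of_mul_le_mul_right c2 (by linarith)
    nlinarith [mul_nonneg (by linarith : (0:ℝ) ≤ Real.log p) (by linarith : (0:ℝ) ≤ √p)]
  · push Not at hkk
    refine ⟨2, le_rfl, by norm_num; linarith, ?_⟩
    intro A hA
    have h1 := A_small p k hk0 A hA
    have h2 : (A.card:ℝ) ≤ k := by exact_mod_cast h1
    have h3 : (k:ℝ) ≤ √p := by
      apply Real.le_sqrt_of_sq_le
      rw [sq]; exact_mod_cast hkk.le
    nlinarith

lemma distinct_aux (p N a b Q H0 q q' t t' r r' y y' v : ℤ) (hp : 0 < p)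
    (hb : 1 ≤ b) (hbQ : b ≤ 2 * Q) (hη : |b * N - a * p| * (2 * Q + 1) ≤ p)
    (hH : 4 * H0 * Q ^ 2 ≤ p) (hq : 1 ≤ q) (hqQ : q ≤ Q) (hq' : 1 ≤ q') (hqQ' : q' ≤ Q)
    (hr : 1 ≤ r) (hrH : r ≤ H0) (hr' : 1 ≤ r') (hrH' : r' ≤ H0)
    (e : q * y = N + t * p + r) (e' : q' * y' = N + t' * p + r') (hv : y' = y + p * v)
    (c : IsCoprime (a + b * t) q) (c' : IsCoprime (a + b * t') q') :
    q = q' ∧ t' - q' * v = t := by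
  set η := b * N - a * p with hηd
  set t2 := t' - q' * v with ht2
  have key : p * ((a + b * t) * q' - (a + b * t2) * q) + η * (q' - q) = b * (q * r' - q' * r) := by
    rw [hηd, ht2]
    subst hv
    linear_combination b * q * e' - b * q' * e
  have h1 : |q * r' - q' * r| ≤ Q * H0 - 1 := by
    have u1 : q * r' ≤ Q * H0 := mul_le_mul hqQ hrH' (by omega) (by omega)
    have u2 : q' * r ≤ Q * H0 := mul_le_mul hqQ' hrH (by omega) (by omega)
    have u3 : 1 ≤ q * r' := by nlinarith
    have u4 : 1 ≤ q' * r := by nlinarith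
    rw [abs_le]; constructor <;> linarith
  have h2 : 2 * |b * (q * r' - q' * r)| < p := by
    rw [abs_mul, abs_of_pos (by omega : 0 < b)]
    have : b * |q * r' - q' * r| ≤ 2 * Q * (Q * H0 - 1) :=
      mul_le_mul hbQ h1 (abs_nonneg _) (by omega)
    nlinarith
  have h3 : 2 * |η * (q' - q)| ≤ p := by
    rw [abs_mul]
    have : |q' - q| ≤ Q := by rw [abs_le]; constructor <;> linarith
    have := mul_le_mul_of_nonneg_left this (abs_nonneg η)
    nlinarith [abs_nonneg η]
  have h4 : |p * ((a + b * t) * q' - (a + b * t2) * q)| < p := by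
    have : p * ((a + b * t) * q' - (a + b * t2) * q) = b * (q * r' - q' * r) - η * (q' - q) := by
      linarith
    rw [this]
    have := abs_sub (b * (q * r' - q' * r)) (η * (q' - q))
    linarith
  have h5 : (a + b * t) * q' - (a + b * t2) * q = 0 := by
    rw [abs_mul, abs_of_pos hp] at h4
    have : |(a + b * t) * q' - (a + b * t2) * q| < 1 := by
      by_contra h
      push Not at h
      nlinarith
    exact Int.abs_lt_one_iff.1 this
  have h6 : (a + b * t) * q' = (a + b * t2) * q := by linarith
  have c2 : IsCoprime (a + b * t2) q' := by
    have : a + b * t2 = a + b * t' + q' * (-(b * v)) := by rw [ht2]; ring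
    rw [this]
    exact c'.add_mul_left_left _
  have d1 : q ∣ q' := by
    apply c.symm.dvd_of_dvd_mul_left
    rw [h6]; exact Dvd.intro_left _ rfl
  have d2 : q' ∣ q := by
    apply c2.symm.dvd_of_dvd_mul_left
    rw [← h6]; exact Dvd.intro_left _ rfl
  have hqq : q = q' := Int.dvd_antisymm (by omega) (by omega) d1 d2
  refine ⟨hqq, ?_⟩
  rw [hqq] at h6
  have := mul_right_cancel₀ (by omega : q' ≠ 0) h6
  have h7 : b * t = b * t2 := by linarith
  exact (mul_left_cancel₀ (by omega : b ≠ 0) h7).symm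

def Tri (n : ℕ) : Finset (Σ _ : ℕ, ℕ) := (Finset.range (n + 1)).sigma (fun r => Finset.range r)

lemma mem_Tri (n : ℕ) (x : Σ _ : ℕ, ℕ) : x ∈ Tri n ↔ x.1 ≤ n ∧ x.2 < x.1 := by
  simp [Tri]

lemma card_Tri (n : ℕ) : (Tri n).card * 2 = (n + 1) * n := by
  rw [Tri, Finset.card_sigma]
  simp only [Finset.card_range]
  rw [Finset.sum_range_id_mul_two]; simp

lemma bad_l (a b : ℤ) (l Q : ℕ) (hl : l.Prime) (hlb : ¬ (l:ℤ) ∣ b) :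
    ((Tri Q).filter (fun x => l ∣ x.1 ∧ (l:ℤ) ∣ a + b * (x.2:ℤ))).card ≤ (Tri (Q / l)).card := by
  apply Finset.card_le_card_of_injOn (fun x => ⟨x.1 / l, x.2 / l⟩)
  · intro x hx
    simp only [Finset.coe_filter, Set.mem_ofPred_eq, mem_Tri] at hx
    obtain ⟨⟨h1, h2⟩, h3, h4⟩ := hx
    simp only [Finset.mem_coe, mem_Tri]
    refine ⟨Nat.div_le_div_right h1, ?_⟩
    rw [Nat.div_lt_iff_lt_mul hl.pos, Nat.div_mul_cancel h3]
    exact h2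
  · rintro ⟨q, t⟩ hx ⟨q', t'⟩ hx' he
    simp only [Finset.coe_filter, Set.mem_ofPred_eq, mem_Tri] at hx hx'
    obtain ⟨⟨h1, h2⟩, h3, h4⟩ := hx
    obtain ⟨⟨h1', h2'⟩, h3', h4'⟩ := hx'
    simp only [Sigma.mk.injEq, heq_eq_eq] at he
    obtain ⟨e1, e2⟩ := he
    have hq : q = q' := by
      rw [← Nat.div_mul_cancel h3, ← Nat.div_mul_cancel h3', e1]
    have hd : (l:ℤ) ∣ b * ((t:ℤ) - t') := by
      have h5 : (l:ℤ) ∣ (a + b * (t:ℤ)) - (a + b * (t':ℤ)) := dvd_sub h4 h4'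
      have h6 : b * ((t:ℤ) - t') = (a + b * (t:ℤ)) - (a + b * (t':ℤ)) := by ring
      rw [h6]; exact h5
    have hd2 : (l:ℤ) ∣ (t:ℤ) - t' := (Int.Prime.dvd_mul' hl hd).resolve_left hlb
    have hm : t' % l = t % l := by
      have := (Nat.modEq_iff_dvd (n := l) (a := t') (b := t)).2 hd2
      exact this
    have ht : t = t' := by
      rw [← Nat.div_add_mod t l, ← Nat.div_add_mod t' l, e2, hm]
    subst hq ht; rfl

lemma sum_inv_sq (n : ℕ) (hn : 1 ≤ n) :
    ∑ l ∈ Finset.Icc 2 n, (1:ℝ) / (l:ℝ) ^ 2 ≤ 2 / 3 - 1 / ((n:ℝ) + 1 / 2) := by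
  induction n, hn using Nat.le_induction with
  | base => norm_num
  | succ n hn ih =>
    rw [Finset.sum_Icc_succ_top (by omega)]
    have hn' : (1:ℝ) ≤ n := by exact_mod_cast hn
    have : (1:ℝ) / ((n+1:ℕ):ℝ) ^ 2 ≤ 1 / ((n:ℝ) + 1/2) - 1 / (((n+1:ℕ):ℝ) + 1/2) := by
      push_cast
      rw [div_sub_div _ _ (by positivity) (by positivity), div_le_div_iff₀ (by positivity) (by positivity)]
      nlinarith
    linarith

lemma good_count (a b : ℤ) (hab : IsCoprime a b) (Q : ℕ) (hQ : 5000 ≤ Q) :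
    0.16 * (Q:ℝ) ^ 2 ≤
      (((Tri Q).filter (fun x => IsCoprime (a + b * (x.2:ℤ)) (x.1:ℤ))).card : ℝ) := by
  set good := (Tri Q).filter (fun x => IsCoprime (a + b * (x.2:ℤ)) (x.1:ℤ)) with hg
  classical
  set B : ℕ → Finset (Σ _ : ℕ, ℕ) := fun l => if l.Prime ∧ ¬ (l:ℤ) ∣ b then
    (Tri Q).filter (fun x => l ∣ x.1 ∧ (l:ℤ) ∣ a + b * (x.2:ℤ)) else ∅ with hB
  have hsub : Tri Q ⊆ good ∪ (Finset.Icc 2 Q).biUnion B := by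
    intro x hx
    rw [Finset.mem_union]
    by_cases hc : IsCoprime (a + b * (x.2:ℤ)) (x.1:ℤ)
    · left; rw [hg, Finset.mem_filter]; exact ⟨hx, hc⟩
    · right
      rw [Int.isCoprime_iff_gcd_eq_one] at hc
      obtain ⟨l, hl, hld⟩ := Nat.exists_prime_and_dvd hc
      have d1 : (l:ℤ) ∣ a + b * (x.2:ℤ) := (Int.natCast_dvd_natCast.2 hld).trans (Int.gcd_dvd_left ..)
      have d2 : (l:ℤ) ∣ (x.1:ℤ) := (Int.natCast_dvd_natCast.2 hld).trans (Int.gcd_dvd_right ..)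
      have d3 : l ∣ x.1 := by exact_mod_cast d2
      have hxx := (mem_Tri Q x).1 hx
      have hlb : ¬ (l:ℤ) ∣ b := by
        intro h
        have : (l:ℤ) ∣ a := (dvd_add_left (h.mul_right _)).1 d1
        have := hab.isUnit_of_dvd' this h
        exact (Nat.prime_iff_prime_int.1 hl).not_isUnit this
      rw [Finset.mem_biUnion]
      refine ⟨l, ?_, ?_⟩
      · rw [Finset.mem_Icc]
        exact ⟨hl.two_le, (Nat.le_of_dvd (by omega) d3).trans hxx.1⟩
      · simp only [hB]
        rw [if_pos ⟨hl, hlb⟩, Finset.mem_filter]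
        exact ⟨hx, d3, d1⟩
  have hBc : ∀ l ∈ Finset.Icc 2 Q, ((B l).card : ℝ) ≤ 0.5075 * (Q:ℝ) ^ 2 * (1 / (l:ℝ) ^ 2) + 8.5 := by
    intro l hl
    rw [Finset.mem_Icc] at hl
    have hl0 : (0:ℝ) < l := by exact_mod_cast (by omega : 0 < l)
    simp only [hB]
    split_ifs with h
    · have h1 := bad_l a b l Q h.1 h.2
      have h2 := card_Tri (Q / l)
      have h1R : (((Tri Q).filter (fun x => l ∣ x.1 ∧ (l:ℤ) ∣ a + b * (x.2:ℤ))).card : ℝ) ≤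
        ((Tri (Q / l)).card : ℝ) := by exact_mod_cast h1
      have h2R : ((Tri (Q / l)).card : ℝ) * 2 = (((Q / l : ℕ) : ℝ) + 1) * ((Q / l : ℕ) : ℝ) := by
        exact_mod_cast h2
      have h3 : ((Q / l : ℕ) : ℝ) ≤ (Q:ℝ) / l := Nat.cast_div_le
      set z := (Q:ℝ) / l with hz
      have hz2 : 0.5075 * (Q:ℝ) ^ 2 * (1 / (l:ℝ) ^ 2) = 0.5075 * z ^ 2 := by
        rw [hz]; field_simp
      rw [hz2]
      have h0 : (0:ℝ) ≤ ((Q / l : ℕ) : ℝ) := by positivity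
      have : (((Q / l : ℕ) : ℝ) + 1) * ((Q / l : ℕ) : ℝ) ≤ (z + 1) * z :=
        mul_le_mul (by linarith) h3 h0 (by linarith)
      nlinarith [sq_nonneg (z - 33)]
    · simp; positivity
  have h1 := Finset.card_le_card hsub
  have h2 := Finset.card_union_le good ((Finset.Icc 2 Q).biUnion B)
  have h3 : ((Finset.Icc 2 Q).biUnion B).card ≤ ∑ l ∈ Finset.Icc 2 Q, (B l).card :=
    Finset.card_biUnion_le
  have h4 : ((Tri Q).card : ℝ) ≤ good.card + ∑ l ∈ Finset.Icc 2 Q, ((B l).card : ℝ) := by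
    have : (Tri Q).card ≤ good.card + ∑ l ∈ Finset.Icc 2 Q, (B l).card := by omega
    exact_mod_cast this
  have h5 := Finset.sum_le_sum hBc
  rw [Finset.sum_add_distrib, ← Finset.mul_sum, Finset.sum_const, Nat.card_Icc, nsmul_eq_mul] at h5
  have h6 := sum_inv_sq Q (by omega)
  have h7 : (0:ℝ) < 1 / ((Q:ℝ) + 1 / 2) := by positivity
  have h8 : 0.5075 * (Q:ℝ) ^ 2 * (∑ l ∈ Finset.Icc 2 Q, (1:ℝ) / (l:ℝ) ^ 2) ≤
      0.5075 * (Q:ℝ) ^ 2 * (2 / 3) := mul_le_mul_of_nonneg_left (by linarith) (by positivity)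
  have h9 : ((Q + 1 - 2 : ℕ) : ℝ) ≤ Q := by exact_mod_cast (by omega : Q + 1 - 2 ≤ Q)
  have h10 : ((Tri Q).card : ℝ) * 2 = ((Q:ℝ) + 1) * Q := by exact_mod_cast card_Tri Q
  have hQR : (5000:ℝ) ≤ Q := by exact_mod_cast hQ
  nlinarith

lemma counting (p : ℕ) [Fact p.Prime] (N : ℤ) (Q h w : ℕ) (hQ : 5000 ≤ Q)
    (hh : 1 ≤ h) (hQp : 4 * (Q * (w + h)) * Q ^ 2 ≤ p) :
    ∃ A : Finset (ZMod p), 0.16 * (Q:ℝ) ^ 2 * w ≤ A.card ∧ ∀ x ∈ A, ∃ q : ℕ, 1 ≤ q ∧ q ≤ Q ∧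
      ∀ i : ℕ, i < h → ∃ r : ℕ, 1 ≤ r ∧ r ≤ Q * (w + h) ∧
        (q : ZMod p) * (x + ((i:ZMod p) + 1)) = ((N + r : ℤ) : ZMod p) := by
  classical
  have hp0 : 0 < p := (Fact.out : p.Prime).pos
  obtain ⟨s, hs, hsd⟩ := Real.exists_rat_abs_sub_le_and_den_le ((N:ℝ) / p) (n := 2 * Q) (by omega)
  set a := s.num with ha
  set b : ℤ := ((s.den : ℕ) : ℤ) with hb
  have hb1 : 1 ≤ b := by have := s.den_pos; omega
  have hbQ : b ≤ 2 * (Q:ℤ) := by omega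
  have hab : IsCoprime a b := by
    rw [Int.isCoprime_iff_nat_coprime]
    simpa [ha, hb] using s.reduced
  have hη : |b * N - a * p| * (2 * (Q:ℤ) + 1) ≤ p := by
    have hpR : (0:ℝ) < p := by exact_mod_cast hp0
    have hbR : (0:ℝ) < (s.den:ℝ) := by exact_mod_cast s.den_pos
    have e1 : (N:ℝ) / p - s = (s.den * N - s.num * p) / (p * s.den) := by
      rw [Rat.cast_def]; field_simp
    rw [e1, abs_div, abs_of_pos (by positivity : (0:ℝ) < p * s.den),
      div_le_div_iff₀ (by positivity) (by positivity)] at hs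
    have : |(s.den:ℝ) * N - s.num * p| * (2 * Q + 1) ≤ p := by
      push_cast at hs
      have : (|(s.den:ℝ) * N - s.num * p| * (2 * Q + 1)) * s.den ≤ p * s.den := by linarith
      exact le_of_mul_le_mul_right this hbR
    have h2 : ((|b * N - a * p| * (2 * (Q:ℤ) + 1) : ℤ) : ℝ) ≤ ((p:ℤ):ℝ) := by
      push_cast [ha, hb]; exact this
    exact_mod_cast h2
  set good := (Tri Q).filter (fun x => IsCoprime (a + b * (x.2:ℤ)) (x.1:ℤ)) with hg
  have hgc := good_count a b hab Q hQ
  rw [← hg] at hgc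
  have hr : ∀ x ∈ good, ∀ j < w, ∀ i < h, ∃ r : ℕ, 1 ≤ r ∧ r ≤ Q * (w + h) ∧
      (x.1:ℤ) * ((N + x.2 * p) / x.1 + j + i + 1) = N + x.2 * p + r := by
    intro x hx j hj i hi
    rw [hg, Finset.mem_filter, mem_Tri] at hx
    obtain ⟨⟨x1, x2⟩, -⟩ := hx
    have hq : (0:ℤ) < x.1 := by omega
    set W : ℤ := N + x.2 * p with hW
    have m1 := Int.mul_ediv_add_emod W x.1
    have m2 := Int.emod_nonneg W hq.ne'
    have m3 := Int.emod_lt_of_pos W hq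
    have k1 : (x.1:ℤ) * (j + i + 1) ≤ Q * (w + h) :=
      mul_le_mul (by omega) (by omega) (by omega) (by omega)
    have k2 : 0 ≤ (x.1:ℤ) * (j + i) := by positivity
    have e : (x.1:ℤ) * (W / x.1 + j + i + 1) - W = (x.1:ℤ) * (j + i + 1) - W % x.1 := by
      linear_combination m1
    have e2 : (x.1:ℤ) * (j + i + 1) = (x.1:ℤ) * (j + i) + x.1 := by ring
    refine ⟨((x.1:ℤ) * (W / x.1 + j + i + 1) - W).toNat, ?_, ?_, ?_⟩
    · rw [e]; omega
    · have : ((((x.1:ℤ) * (W / x.1 + j + i + 1) - W).toNat : ℕ) : ℤ) ≤ Q * (w + h) := by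
        rw [e, Int.toNat_of_nonneg (by omega)]; omega
      exact_mod_cast this
    · rw [Int.toNat_of_nonneg (by rw [e]; omega)]; ring
  set F : (Σ _ : ℕ, ℕ) × ℕ → ZMod p := fun z =>
    (((N + z.1.2 * p) / z.1.1 + z.2 : ℤ) : ZMod p) with hF
  have hinj : Set.InjOn F (good ×ˢ Finset.range w : Finset _) := by
    rintro ⟨⟨q, t⟩, j⟩ hz ⟨⟨q', t'⟩, j'⟩ hz' he
    simp only [Finset.coe_product, Set.mem_prod, Finset.mem_coe, Finset.mem_range] at hz hz'
    obtain ⟨hz, hj⟩ := hz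
    obtain ⟨hz', hj'⟩ := hz'
    obtain ⟨r, r1, r2, r3⟩ := hr _ hz j hj 0 (by omega)
    obtain ⟨r', r1', r2', r3'⟩ := hr _ hz' j' hj' 0 (by omega)
    rw [hg, Finset.mem_filter, mem_Tri] at hz hz'
    obtain ⟨⟨x1, x2⟩, x3⟩ := hz
    obtain ⟨⟨x1', x2'⟩, x3'⟩ := hz'
    simp only [hF] at he
    rw [ZMod.intCast_eq_intCast_iff_dvd_sub] at he
    obtain ⟨v, hv⟩ := he
    simp only at r3 r3' x1 x2 x3 x1' x2' x3'
    have hd := distinct_aux p N a b Q (Q * (w + h) : ℕ) q q' t t' r r' _ _ v (by omega) hb1 hbQ hη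
      (by exact_mod_cast hQp) (by omega) (by omega) (by omega) (by omega) (by omega)
      (by exact_mod_cast r2) (by omega) (by exact_mod_cast r2') r3 r3'
      (by linear_combination hv) x3 x3'
    obtain ⟨e1, e2⟩ := hd
    have e1' : q = q' := by exact_mod_cast e1
    subst e1'
    have hv0 : v = 0 := by
      have : (q:ℤ) * v = t' - t := by linarith
      have h3 : |(q:ℤ) * v| < q := by rw [this, abs_lt]; constructor <;> omega
      rw [abs_mul, abs_of_pos (by omega : (0:ℤ) < q)] at h3
      by_contra hv0
      have := Int.one_le_abs hv0
      nlinarith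
    subst hv0
    have ht : t = t' := by simp at e2; omega
    subst ht
    have : j = j' := by
      simp at hv; omega
    subst this; rfl
  refine ⟨(good ×ˢ Finset.range w).image F, ?_, ?_⟩
  · rw [Finset.card_image_of_injOn hinj, Finset.card_product, Finset.card_range]
    push_cast
    exact mul_le_mul_of_nonneg_right hgc (by positivity)
  · intro x hx
    rw [Finset.mem_image] at hx
    obtain ⟨⟨⟨q, t⟩, j⟩, hz, rfl⟩ := hx
    rw [Finset.mem_product, Finset.mem_range] at hz
    obtain ⟨hz, hj⟩ := hz
    have hz2 := hz
    rw [hg, Finset.mem_filter, mem_Tri] at hz2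
    obtain ⟨⟨x1, x2⟩, -⟩ := hz2
    simp only at x1 x2 hj
    refine ⟨q, by omega, by omega, ?_⟩
    intro i hi
    obtain ⟨r, r1, r2, r3⟩ := hr _ hz j hj i hi
    refine ⟨r, r1, r2, ?_⟩
    have := congrArg (Int.cast : ℤ → ZMod p) r3
    simp only [hF]
    push_cast at this ⊢
    simp only [CharP.cast_eq_zero, mul_zero, add_zero] at this
    rw [← this]
    ring

lemma char_setup (p : ℕ) [Fact p.Prime] (χ : DirichletCharacter ℂ p) (hχ : χ ≠ 1) :
    ∃ k d : ℕ, k * d = p - 1 ∧ 2 ≤ d ∧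
      ∀ α β : ZMod p, α ≠ 0 → β ≠ 0 → χ α = χ β → α ^ k = β ^ k := by
  set K := (MulChar.toUnitHom χ).ker with hK
  have hcard : Nat.card K * K.index = p - 1 := by
    rw [Subgroup.card_mul_index, Nat.card_eq_fintype_card, ZMod.card_units]
  have hp2 : 2 ≤ p := (Fact.out : p.Prime).two_le
  refine ⟨Nat.card K, K.index, hcard, ?_, ?_⟩
  · have h0 : K.index ≠ 0 := by
      intro h; rw [h] at hcard; omega
    have h1 : K.index ≠ 1 := by
      intro h
      rw [Subgroup.index_eq_one] at h
      apply hχ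
      ext a
      have : a ∈ K := by rw [h]; trivial
      rw [hK, MonoidHom.mem_ker, Units.ext_iff, MulChar.coe_toUnitHom] at this
      rw [this]; simp
    omega
  · intro α β hα hβ he
    set g : (ZMod p)ˣ := Units.mk0 α hα * (Units.mk0 β hβ)⁻¹ with hg
    have hgK : g ∈ K := by
      rw [hK, MonoidHom.mem_ker, hg, map_mul, map_inv, mul_inv_eq_one, Units.ext_iff,
        MulChar.coe_toUnitHom, MulChar.coe_toUnitHom]
      simpa using he
    have h1 : g ^ Nat.card K = 1 := by
      have := pow_card_eq_one' (x := (⟨g, hgK⟩ : K))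
      exact congrArg Subtype.val this
    rw [hg, mul_pow, inv_pow, mul_inv_eq_one, Units.ext_iff] at h1
    simpa using h1

lemma numerics (p : ℕ) (hp : 10 ^ 19 ≤ p) (h : ℕ) (hh : (h:ℝ) ≤ 0.722 * Real.log p) (H : ℕ)
    (hH : 7.1 * (p : ℝ) ^ ((1:ℝ)/4) * Real.log p ≤ H) :
    ∃ Q w : ℕ, 5000 ≤ Q ∧ Q * (w + h) ≤ H ∧ 4 * (Q * (w + h)) * Q ^ 2 ≤ p ∧
      1.56 * Real.log p * √p < 0.16 * (Q:ℝ) ^ 2 * w := by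
  have hpR : (10:ℝ) ^ 19 ≤ p := by exact_mod_cast hp
  have hp0 : (0:ℝ) ≤ p := by positivity
  set y : ℝ := (p:ℝ) ^ ((1:ℝ)/4) with hy
  have hy0 : 0 ≤ y := by positivity
  have hy4 : y ^ 4 = p := by
    rw [hy, ← Real.rpow_natCast, ← Real.rpow_mul hp0]; norm_num
  have hy50 : (50000:ℝ) ≤ y := by
    by_contra hc
    push Not at hc
    have : y ^ 4 ≤ 50000 ^ 4 := pow_le_pow_left₀ hy0 hc.le 4
    rw [hy4] at this
    norm_num at this hpR
    linarith
  have hsq : √(p:ℝ) = y ^ 2 := by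
    rw [← hy4, show y ^ 4 = (y ^ 2) ^ 2 by ring, Real.sqrt_sq (by positivity)]
  set L := Real.log p with hL
  have hlog2 := Real.log_two_gt_d9
  have hlog2' := Real.log_two_lt_d9
  have hL43 : 43 ≤ L := by
    have : Real.log ((2:ℝ) ^ 63) ≤ Real.log p := Real.log_le_log (by positivity) (by norm_num at hpR ⊢; linarith)
    rw [Real.log_pow] at this
    push_cast at this
    linarith
  have hLy : L ≤ 4 * (y / 32768 + 9.4) := by
    have e1 : L = 4 * Real.log y := by rw [hL, ← hy4, Real.log_pow]; norm_num
    have e2 : Real.log y = Real.log (y / 2 ^ 15) + 15 * Real.log 2 := by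
      rw [Real.log_div (by linarith) (by norm_num), Real.log_pow]; norm_num
    have e3 := Real.log_le_sub_one_of_pos (show 0 < y / 2 ^ 15 by positivity)
    norm_num at e3
    rw [e1, e2]; norm_num; linarith
  set Q := ⌊4 * y⌋₊ with hQ
  set w := ⌈0.7 * L⌉₊ with hw
  have q1 : (Q:ℝ) ≤ 4 * y := Nat.floor_le (by positivity)
  have q2 : 4 * y < Q + 1 := Nat.lt_floor_add_one _
  have w1 : 0.7 * L ≤ w := Nat.le_ceil _
  have w2 : (w:ℝ) < 0.7 * L + 1 := Nat.ceil_lt_add_one (by linarith)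
  have wh : (w:ℝ) + h ≤ 1.522 * L := by linarith
  have hQ0 : (0:ℝ) ≤ Q := by positivity
  have k1 : (Q:ℝ) * (w + h) ≤ 6.088 * (y * L) := by
    calc (Q:ℝ) * (w + h) ≤ (4 * y) * (1.522 * L) :=
          mul_le_mul q1 wh (by positivity) (by positivity)
      _ = _ := by ring
  have hyL : 0 ≤ y * L := by positivity
  refine ⟨Q, w, ?_, ?_, ?_, ?_⟩
  · have : (5000:ℝ) ≤ Q := by linarith
    exact_mod_cast this
  · have : (Q:ℝ) * (w + h) ≤ H := by linarith
    exact_mod_cast this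
  · have : 4 * ((Q:ℝ) * (w + h)) * Q ^ 2 ≤ p := by
      have a1 : (Q:ℝ) ^ 2 ≤ (4 * y) ^ 2 := pow_le_pow_left₀ hQ0 q1 2
      calc 4 * ((Q:ℝ) * (w + h)) * Q ^ 2 ≤ 4 * (6.088 * (y * L)) * (4 * y) ^ 2 :=
            mul_le_mul (by linarith) a1 (by positivity) (by linarith)
        _ = y ^ 3 * (389.632 * L) := by ring
        _ ≤ y ^ 3 * y := by
            apply mul_le_mul_of_nonneg_left _ (by positivity)
            linarith
        _ = p := by rw [← hy4]; ring
    exact_mod_cast this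
  · rw [hsq]
    have a0 : 3.99 * y ≤ Q := by linarith
    have a1 : (3.99 * y) ^ 2 ≤ (Q:ℝ) ^ 2 := pow_le_pow_left₀ (by positivity) a0 2
    have a2 : (3.99 * y) ^ 2 * (0.7 * L) ≤ (Q:ℝ) ^ 2 * w :=
      mul_le_mul a1 w1 (by positivity) (by positivity)
    have a3 : 0 < L * y ^ 2 := by positivity
    have a4 : (3.99 * y) ^ 2 * (0.7 * L) = 11.14407 * (L * y ^ 2) := by ring
    rw [a4] at a2
    linarith

end

theorem consecutive_constant_bound (p : ℕ) [Fact p.Prime] (hp : (10:ℕ)^19 ≤ p)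
    (χ : DirichletCharacter ℂ p) (hχ : χ ≠ 1)
    (N : ℤ) (H : ℕ) (hH : 0 < H)
    (hconst : ∀ i : ℕ, 1 ≤ i → i ≤ H → χ ((N + i : ℤ) : ZMod p) = χ ((N + 1 : ℤ) : ZMod p)) :
    (H : ℝ) < 7.1 * (p : ℝ) ^ ((1:ℝ)/4) * Real.log p := by
  by_contra hc
  push Not at hc
  obtain ⟨k, d, hkd, hd, hpow⟩ := char_setup p χ hχ
  obtain ⟨h, h2, hhL, hA⟩ := A_bound p hp k d hkd hd
  obtain ⟨Q, w, hQ, hQH, hQp, hfin⟩ := numerics p hp h hhL H hc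
  obtain ⟨A, hAc, hAx⟩ := counting p N Q h w hQ (by omega) hQp
  have hH2 : 2 ≤ H := by nlinarith
  -- the constant value is non-zero
  have hne : χ ((N + 1 : ℤ) : ZMod p) ≠ 0 := by
    intro h0
    have h1 := hconst 2 (by omega) hH2
    rw [h0] at h1
    have z : ∀ x : ZMod p, χ x = 0 → x = 0 := by
      intro x hx
      by_contra hx0
      exact ((IsUnit.mk0 x hx0).map χ).ne_zero hx
    have z1 := z _ h0
    have z2 := z _ h1
    push_cast at z1 z2
    have : (1 : ZMod p) = 0 := by linear_combination z2 - z1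
    exact one_ne_zero this
  have hQltp : Q < p := by
    have : 1 ≤ Q * (w + h) := Nat.mul_pos (by omega) (by omega)
    nlinarith
  have := hA A (by
    intro x hx i hi
    obtain ⟨q, hq1, hqQ, hqr⟩ := hAx x hx
    have hq0 : (q : ZMod p) ≠ 0 := by
      intro e
      rw [ZMod.natCast_eq_zero_iff] at e
      have := Nat.le_of_dvd (by omega) e
      omega
    have hval : ∀ i : ℕ, i < h → χ (q : ZMod p) * χ (x + ((i:ZMod p) + 1)) =
        χ ((N + 1 : ℤ) : ZMod p) := by
      intro i hi
      obtain ⟨r, r1, r2, r3⟩ := hqr i hi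
      rw [← map_mul, r3]
      exact hconst r r1 (r2.trans hQH)
    have hnz : ∀ i : ℕ, i < h → x + ((i:ZMod p) + 1) ≠ 0 := by
      intro i hi e
      have := hval i hi
      rw [e, MulChar.map_zero, mul_zero] at this
      exact hne this.symm
    have hqχ : χ (q : ZMod p) ≠ 0 := ((IsUnit.mk0 _ hq0).map χ).ne_zero
    refine ⟨hnz i hi, ?_⟩
    have n0 := hnz 0 (by omega)
    have v0 := hval 0 (by omega)
    simp only [Nat.cast_zero, zero_add] at n0 v0
    exact hpow _ _ (hnz i hi) n0 (mul_left_cancel₀ hqχ ((hval i hi).trans v0.symm)))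
  linarith
end

section
/- Let χ be a non-principal Dirichlet character modulo a prime p, and let q_1 be the smallest prime non-residue of χ. Then q_1 < 4.7·p^{1/4}·log p. -/
open Polynomial in
lemma kummer_root {F L : Type*} [Field F] [Field L] [Algebra F L] {ℓ : ℕ} (hℓ : ℓ.Prime)
    {ζ : F} (hζ : IsPrimitiveRoot ζ ℓ) (pb : PowerBasis F L) (hdim : pb.dim = ℓ) (g : F)
    (hmin : minpoly F pb.gen = X ^ ℓ - C g) (β : L) (c : F) (hβ : β ^ ℓ = algebraMap F L c) :
    ∃ b : F, ∃ j : ℕ, β = algebraMap F L b * pb.gen ^ j := by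
  have : NeZero ℓ := ⟨hℓ.ne_zero⟩
  by_cases h0 : β = 0
  · exact ⟨0, 0, by simp [h0]⟩
  have hgen : pb.gen ^ ℓ = algebraMap F L g := by
    have := minpoly.aeval F pb.gen
    rw [hmin] at this
    simpa [sub_eq_zero] using this
  have hroot : (aeval (algebraMap F L ζ * pb.gen)) (minpoly F pb.gen) = 0 := by
    rw [hmin]
    simp only [map_sub, map_pow, aeval_X, aeval_C, mul_pow]
    rw [← map_pow, hζ.pow_eq_one, hgen]
    simp
  let σ := pb.lift _ hroot
  have hσ : σ pb.gen = algebraMap F L ζ * pb.gen := pb.lift_gen _ hroot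
  have hζL : IsPrimitiveRoot (algebraMap F L ζ) ℓ :=
    hζ.map_of_injective (algebraMap F L).injective
  have h1 : (σ β / β) ^ ℓ = 1 := by
    rw [div_pow, ← map_pow, hβ, AlgHom.commutes, ← hβ, div_self (pow_ne_zero _ h0)]
  obtain ⟨i, hi, hi2⟩ := hζL.eq_pow_of_pow_eq_one h1
  have h2 : σ β = algebraMap F L (ζ ^ i) * β := by
    rw [map_pow, hi2, div_mul_cancel₀ _ h0]
  have h3 : β = ∑ k : Fin pb.dim, pb.basis.repr β k • pb.gen ^ (k : ℕ) := by
    conv_lhs => rw [← pb.basis.sum_repr β]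
    simp
  have h4 : σ β = ∑ k : Fin pb.dim, (pb.basis.repr β k * ζ ^ (k : ℕ)) • pb.basis k := by
    conv_lhs => rw [h3]
    rw [map_sum]
    refine Finset.sum_congr rfl fun k _ => ?_
    rw [map_smul, map_pow, hσ, pb.basis_eq_pow, mul_pow, ← map_pow, mul_smul, Algebra.smul_def (ζ ^ _)]
  have h5 : ∀ k : Fin pb.dim, pb.basis.repr β k * ζ ^ (k : ℕ) = ζ ^ i * pb.basis.repr β k := by
    intro k
    have e1 : pb.basis.repr (σ β) k = pb.basis.repr β k * ζ ^ (k : ℕ) := by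
      rw [h4, pb.basis.repr_sum_self]
    rw [← e1, h2, ← Algebra.smul_def]
    simp
  have hi' : i < pb.dim := hdim ▸ hi
  refine ⟨pb.basis.repr β ⟨i, hi'⟩, i, ?_⟩
  conv_lhs => rw [h3]
  rw [Finset.sum_eq_single ⟨i, hi'⟩]
  · rw [Algebra.smul_def]
  · intro k _ hk
    have : pb.basis.repr β k = 0 := by
      by_contra hne
      have := h5 k
      rw [mul_comm] at this
      have := mul_right_cancel₀ hne this
      exact hk (Fin.ext (hζ.pow_inj (hdim ▸ k.2) hi this))
    rw [this, zero_smul]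
  · simp

open Polynomial IntermediateField in
theorem kummer_indep {Ω : Type} [Field Ω] {ℓ : ℕ} (hℓ : ℓ.Prime) (n : ℕ) :
    ∀ {F : Type} [Field F] [Algebra F Ω] {ζ : F} (_ : IsPrimitiveRoot ζ ℓ)
    (g : Fin n → F) (z : Fin n → Ω) (_ : ∀ i, z i ^ ℓ = algebraMap F Ω (g i))
    (_ : ∀ a : Fin n → ℕ, (∃ b : F, ∏ i, g i ^ a i = b ^ ℓ) → ∀ i, ℓ ∣ a i),
    LinearIndependent F (fun e : Fin n → Fin ℓ => ∏ i, z i ^ (e i : ℕ)) := by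
  induction n with
  | zero =>
    intro F _ _ ζ _ g z _ _
    rw [linearIndependent_unique_iff]
    simp
  | succ n ih =>
    intro F _ _ ζ hζ g z hz hg
    have hirr : Irreducible (X ^ ℓ - C (g 0)) := by
      refine X_pow_sub_C_irreducible_of_prime hℓ fun b hb => ?_
      have := hg (Pi.single 0 1) ⟨b, by
        rw [Fin.prod_univ_succ]; simp [hb]⟩ 0
      simp at this
      exact hℓ.one_lt.ne' this
    have hmin : minpoly F (z 0) = X ^ ℓ - C (g 0) :=
      (minpoly.eq_of_irreducible_of_monic hirr (by simp [hz]) (monic_X_pow_sub_C _ hℓ.ne_zero)).symm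
    have hzI : IsIntegral F (z 0) := by
      by_contra h
      have := minpoly.eq_zero h
      rw [hmin] at this
      exact hirr.ne_zero this
    let pb := adjoin.powerBasis hzI
    have hpbgen : pb.gen = AdjoinSimple.gen F (z 0) := adjoin.powerBasis_gen hzI
    have hdim : pb.dim = ℓ := by
      rw [adjoin.powerBasis_dim, hmin, natDegree_X_pow_sub_C]
    have hmin' : minpoly F pb.gen = X ^ ℓ - C (g 0) := by
      rw [hpbgen, minpoly_gen, hmin]
    have hgen : pb.gen ^ ℓ = algebraMap F F⟮z 0⟯ (g 0) := by
      have := minpoly.aeval F pb.gen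
      rw [hmin'] at this
      simpa [sub_eq_zero] using this
    have hζ' : IsPrimitiveRoot (algebraMap F F⟮z 0⟯ ζ) ℓ :=
      hζ.map_of_injective (algebraMap F F⟮z 0⟯).injective
    have key := ih (F := F⟮z 0⟯) hζ' (fun i => algebraMap F F⟮z 0⟯ (g i.succ)) (fun i => z i.succ)
      (fun i => by
        rw [hz]
        exact (IsScalarTower.algebraMap_apply F F⟮z 0⟯ Ω _)) (by
      rintro a ⟨β, hβ⟩ i
      have hβ' : β ^ ℓ = algebraMap F F⟮z 0⟯ (∏ i, g i.succ ^ a i) := by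
        rw [← hβ]; simp
      obtain ⟨b, j, hb⟩ := kummer_root hℓ hζ pb hdim (g 0) hmin' β _ hβ'
      have e1 : ∏ i : Fin n, g i.succ ^ a i = b ^ ℓ * g 0 ^ j := by
        apply (algebraMap F F⟮z 0⟯).injective
        rw [← hβ', hb, mul_pow, ← pow_mul, mul_comm j, pow_mul, hgen]
        simp
      have := hg (Fin.cons ((ℓ - 1) * j) a) ⟨b * g 0 ^ j, by
        rw [Fin.prod_univ_succ]
        simp only [Fin.cons_zero, Fin.cons_succ]
        rw [e1, mul_pow, ← pow_mul]
        obtain ⟨k, rfl⟩ : ∃ k, ℓ = k + 1 := ⟨ℓ - 1, by have := hℓ.pos; omega⟩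
        simp only [Nat.add_sub_cancel]
        ring⟩ i.succ
      simpa using this)
    have hb : LinearIndependent F (fun i : Fin ℓ => pb.gen ^ (i : ℕ)) := by
      have := pb.basis.linearIndependent
      rw [pb.coe_basis] at this
      exact this.comp (Fin.cast hdim.symm) (Fin.cast_injective _)
    have := linearIndependent_smul hb key
    have h2 := this.comp _ (Fin.consEquiv (fun _ => Fin ℓ)).symm.injective
    convert h2 using 2 with e
    rw [Fin.prod_univ_succ]
    simp [Fin.consEquiv, Algebra.smul_def, hpbgen, Fin.tail]

section Tuples
open Polynomial

noncomputable def carryCoef {F : Type} [Field F] {ℓ n : ℕ} (a : Fin n → F) (e e' : Fin n → Fin ℓ) : F[X] :=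
  ∏ h, if (e h : ℕ) + (e' h : ℕ) < ℓ then (X + C (a h)) else C (a h)

noncomputable def tmul {F : Type} [Field F] {ℓ n : ℕ} (a : Fin n → F)
    (f g : (Fin n → Fin ℓ) → F[X]) : (Fin n → Fin ℓ) → F[X] := fun r =>
  ∑ e, ∑ e', if e + e' = r then f e * g e' * carryCoef a e e' else 0

noncomputable def tev {F : Type} [Field F] {S : Type} [CommRing S] {ℓ n : ℕ} (φ : F[X] →+* S)
    (w : Fin n → S) (f : (Fin n → Fin ℓ) → F[X]) : S :=
  ∑ e, φ (f e) * ∏ h, w h ^ (e h : ℕ)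

lemma tev_tmul {F : Type} [Field F] {S : Type} [CommRing S] {ℓ n : ℕ} (φ : F[X] →+* S)
    (w : Fin n → S) (a : Fin n → F)
    (hw : ∀ h, φ (X + C (a h)) * w h ^ ℓ = φ (C (a h)))
    (f g : (Fin n → Fin ℓ) → F[X]) :
    tev φ w (tmul a f g) = φ (∏ h, (X + C (a h))) * (tev φ w f * tev φ w g) := by
  have key : ∀ e e' : Fin n → Fin ℓ, φ (carryCoef a e e') * ∏ h, w h ^ ((e + e') h : ℕ) =
      φ (∏ h, (X + C (a h))) * ((∏ h, w h ^ (e h : ℕ)) * ∏ h, w h ^ (e' h : ℕ)) := by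
    intro e e'
    unfold carryCoef
    rw [map_prod, map_prod, ← Finset.prod_mul_distrib, ← Finset.prod_mul_distrib,
      ← Finset.prod_mul_distrib]
    refine Finset.prod_congr rfl fun h _ => ?_
    rw [Pi.add_apply, Fin.val_add, ← pow_add]
    split_ifs with hlt
    · rw [Nat.mod_eq_of_lt hlt]
    · have h1 := (e h).2
      have h2 := (e' h).2
      have : ((e h : ℕ) + (e' h : ℕ)) % ℓ = (e h : ℕ) + (e' h : ℕ) - ℓ := by
        rw [Nat.mod_eq_sub_mod (by omega), Nat.mod_eq_of_lt (by omega)]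
      rw [this, ← hw, mul_assoc, ← pow_add]
      congr 2
      omega
  unfold tev tmul
  simp only [map_sum, Finset.sum_mul]
  rw [Finset.sum_comm]
  rw [Finset.mul_sum]
  refine Finset.sum_congr rfl fun e _ => ?_
  rw [Finset.sum_comm]
  simp only [Finset.mul_sum]
  refine Finset.sum_congr rfl fun e' _ => ?_
  rw [Finset.sum_eq_single (e + e')]
  · rw [if_pos rfl, map_mul, map_mul, mul_assoc, key]
    ring
  · intro r _ hr
    rw [if_neg (Ne.symm hr)]
    simp
  · simp

lemma mul_mem_degreeLT {F : Type} [Field F] {f g : F[X]} {k d : ℕ} (hf : f ∈ degreeLT F k)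
    (hg : g.natDegree ≤ d) : f * g ∈ degreeLT F (k + d) := by
  rw [mem_degreeLT] at *
  by_cases h0 : f = 0
  · subst h0; simp
  have : f.natDegree < k := (natDegree_lt_iff_degree_lt h0).2 hf
  refine lt_of_le_of_lt degree_le_natDegree ?_
  have := natDegree_mul_le (p := f) (q := g)
  exact_mod_cast (by omega : (f * g).natDegree < k + d)

lemma natDegree_carryCoef {F : Type} [Field F] {ℓ n : ℕ} (a : Fin n → F) (e e' : Fin n → Fin ℓ) :
    (carryCoef a e e').natDegree ≤ n := by
  unfold carryCoef
  refine (natDegree_prod_le _ _).trans ?_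
  calc _ ≤ ∑ h : Fin n, 1 := Finset.sum_le_sum fun h _ => by
        split_ifs
        · simp
        · simp
    _ = n := by simp

lemma tmul_mem {F : Type} [Field F] {ℓ n : ℕ} (a : Fin n → F)
    (f g : (Fin n → Fin ℓ) → F[X]) (D k : ℕ) (hf : ∀ e, (f e) ∈ degreeLT F D)
    (hg : ∀ e, g e ∈ degreeLT F k) (r) : tmul a f g r ∈ degreeLT F (k + (D + n)) := by
  unfold tmul
  refine Submodule.sum_mem _ fun e _ => Submodule.sum_mem _ fun e' _ => ?_
  split_ifs
  · have : f e * g e' * carryCoef a e e' = g e' * (f e * carryCoef a e e') := by ring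
    rw [this]
    refine mul_mem_degreeLT (hg e') ?_
    have h1 := natDegree_carryCoef a e e'
    have h2 : (f e).natDegree ≤ D := by
      have := hf e
      rw [mem_degreeLT] at this
      exact natDegree_le_of_degree_le this.le
    exact (natDegree_mul_le).trans (by omega)
  · exact Submodule.zero_mem _

lemma nonvanish_abstract {F : Type} [Field F] {ℓ n : ℕ} [NeZero ℓ] (a : Fin n → F) (p D : ℕ)
    (hdom : ∀ f g : (Fin n → Fin ℓ) → F[X], tmul a f g = 0 → f = 0 ∨ g = 0)
    (y : Fin n → F[X]) (hy : ∀ h, X ^ p ∣ (X + C (a h)) * y h ^ ℓ - C (a h))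
    (f : (Fin n → Fin ℓ) → F[X]) (hf : ∀ e, f e ∈ degreeLT F D)
    (hdvd : X ^ p ∣ ∑ e, f e * ∏ h, y h ^ (e h : ℕ))
    (hlt : ℓ ^ n * (D + n) < p) : f = 0 := by
  by_contra hf0
  let E := Fin n → Fin ℓ
  let I : Ideal F[X] := Ideal.span {X ^ p}
  let φ : F[X] →+* F[X] ⧸ I := Ideal.Quotient.mk I
  have hφ : ∀ u : F[X], φ u = 0 ↔ X ^ p ∣ u := fun u => by
    rw [Ideal.Quotient.eq_zero_iff_mem, Ideal.mem_span_singleton]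
  have hw : ∀ h, φ (X + C (a h)) * (φ (y h)) ^ ℓ = φ (C (a h)) := fun h => by
    rw [← sub_eq_zero, ← map_pow, ← map_mul, ← map_sub, hφ]
    exact hy h
  have hfz : tev φ (fun h => φ (y h)) f = 0 := by
    have := (hφ _).2 hdvd
    simpa [tev, map_sum, map_mul, map_prod, map_pow] using this
  let T : ((E → degreeLT F p) × degreeLT F p) →ₗ[F] (E → degreeLT F (p + (D + n))) :=
    { toFun := fun gu r => ⟨tmul a f (fun e => (gu.1 e : F[X])) r + (if r = 0 then (gu.2 : F[X]) else 0),
        Submodule.add_mem _ (tmul_mem a f _ D p hf (fun e => (gu.1 e).2) r) (by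
          split_ifs
          · exact degreeLT_mono (Nat.le_add_right _ _) gu.2.2
          · exact Submodule.zero_mem _)⟩
      map_add' := by
        intro u v
        funext r
        apply Subtype.ext
        simp only [tmul, Prod.fst_add, Prod.snd_add, Pi.add_apply, Submodule.coe_add]
        have : ∀ (e e' : E), (if e + e' = r then f e * ((u.1 e' : F[X]) + (v.1 e' : F[X])) * carryCoef a e e' else 0)
          = (if e + e' = r then f e * (u.1 e' : F[X]) * carryCoef a e e' else 0) +
            (if e + e' = r then f e * (v.1 e' : F[X]) * carryCoef a e e' else 0) := by
          intro e e'
          split_ifs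
          · ring
          · simp
        simp only [E] at this
        simp only [this, Finset.sum_add_distrib]
        split_ifs
        · ring
        · ring
      map_smul' := by
        intro c u
        funext r
        apply Subtype.ext
        simp only [tmul, Prod.smul_fst, Prod.smul_snd, Pi.smul_apply, Submodule.coe_smul, RingHom.id_apply,
          smul_add, Finset.smul_sum, smul_ite, smul_zero, mul_smul_comm, smul_mul_assoc] }
  have hT : Function.Injective T := by
    rw [← LinearMap.ker_eq_bot, LinearMap.ker_eq_bot']
    rintro ⟨g, u⟩ hgu
    let G : E → F[X] := fun e => (g e : F[X])
    have h1 : ∀ r, tmul a f G r + (if r = 0 then (u : F[X]) else 0) = 0 := fun r =>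
      congrArg Subtype.val (congrFun hgu r)
    have h2 : tev φ (fun h => φ (y h)) (tmul a f G) = 0 := by
      rw [tev_tmul φ _ a hw, hfz]; simp
    have h3 : φ (u : F[X]) = 0 := by
      have e1 : ∀ r, tmul a f G r = - (if r = 0 then (u : F[X]) else 0) := fun r =>
        eq_neg_of_add_eq_zero_left (h1 r)
      unfold tev at h2
      simp only [e1] at h2
      rw [Finset.sum_eq_single 0] at h2
      · simpa using h2
      · intro b _ hb
        simp [hb]
      · simp
    have h4 : (u : F[X]) = 0 := by
      refine eq_zero_of_dvd_of_degree_lt ((hφ _).1 h3) ?_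
      rw [degree_X_pow]
      exact mem_degreeLT.1 u.2
    have h5 : tmul a f G = 0 := by
      funext r
      have := h1 r
      simpa [h4] using this
    have h6 := (hdom f G h5).resolve_left hf0
    refine Prod.ext ?_ (Subtype.ext h4)
    funext e
    exact Subtype.ext (congrFun h6 e)
  have hle := LinearMap.finrank_le_finrank_of_injective hT
  have fr : ∀ k, Module.finrank F (degreeLT F k) = k := fun k => by
    rw [(degreeLTEquiv F k).finrank_eq]; simp
  have fin : ∀ k, Module.Finite F (degreeLT F k) := fun k =>
    Module.Finite.equiv (degreeLTEquiv F k).symm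
  rw [Module.finrank_prod, Module.finrank_pi_fintype, Module.finrank_pi_fintype] at hle
  simp only [fr, Finset.sum_const, Finset.card_univ, smul_eq_mul, E, Fintype.card_fun, Fintype.card_fin] at hle
  rw [Nat.mul_add] at hle
  omega

end Tuples
section Domain
open Polynomial

lemma dvd_of_pow_identity {F : Type} [Field F] {ℓ n : ℕ} (a : Fin n → F) (ha : Function.Injective a)
    (k : Fin n → ℕ) (c : F) (hc : c ≠ 0) (u v : F[X]) (hu : u ≠ 0) (hv : v ≠ 0)
    (h : C c * v ^ ℓ = u ^ ℓ * ∏ i, (X + C (a i)) ^ k i) (i : Fin n) : ℓ ∣ k i := by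
  have hpow : ∀ (w : F[X]) (j : ℕ) (x : F), w ≠ 0 → rootMultiplicity x (w ^ j) = j * rootMultiplicity x w := by
    intro w j x hw
    classical
    rw [← count_roots, ← count_roots, roots_pow, Multiset.count_nsmul]
  have hX : ∀ i, (X + C (a i)) ≠ 0 := fun i => X_add_C_ne_zero _
  have hrest : rootMultiplicity (-(a i)) (∏ j ∈ Finset.univ.erase i, (X + C (a j)) ^ k j) = 0 := by
    apply rootMultiplicity_eq_zero
    rw [IsRoot, eval_prod, Finset.prod_eq_zero_iff]
    rintro ⟨j, hj, hj2⟩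
    rw [eval_pow] at hj2
    have := eq_zero_of_pow_eq_zero hj2
    simp only [eval_add, eval_X, eval_C] at this
    have : a j = a i := by linear_combination this
    exact (Finset.mem_erase.1 hj).1 (ha this)
  have hne : (∏ j ∈ Finset.univ.erase i, (X + C (a j)) ^ k j) ≠ 0 :=
    Finset.prod_ne_zero_iff.2 fun j _ => pow_ne_zero _ (hX j)
  rw [← Finset.mul_prod_erase _ _ (Finset.mem_univ i)] at h
  have h1 := congrArg (rootMultiplicity (-(a i))) h
  have hXi : rootMultiplicity (-(a i)) (X + C (a i)) = 1 := by
    have : X + C (a i) = X - C (-(a i)) := by simp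
    rw [this, rootMultiplicity_X_sub_C_self]
  rw [rootMultiplicity_mul (mul_ne_zero (C_ne_zero.2 hc) (pow_ne_zero _ hv)), rootMultiplicity_C,
    rootMultiplicity_mul (mul_ne_zero (pow_ne_zero _ hu) (mul_ne_zero (pow_ne_zero _ (hX i)) hne)),
    rootMultiplicity_mul (mul_ne_zero (pow_ne_zero _ (hX i)) hne), hrest, hpow _ _ _ hv, hpow _ _ _ hu,
    hpow _ _ _ (hX i), hXi] at h1
  have h2 : ℓ ∣ ℓ * rootMultiplicity (-a i) u + k i := ⟨rootMultiplicity (-a i) v, by omega⟩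
  exact (Nat.dvd_add_right (Dvd.intro _ rfl)).1 h2

lemma tuple_domain {F : Type} [Field F] {ℓ n : ℕ} (hℓ : ℓ.Prime) {ζ : F} (hζ : IsPrimitiveRoot ζ ℓ)
    (a : Fin n → F) (ha : Function.Injective a) (ha0 : ∀ i, a i ≠ 0)
    (f g : (Fin n → Fin ℓ) → F[X]) (hfg : tmul a f g = 0) : f = 0 ∨ g = 0 := by
  let K := FractionRing F[X]
  let Ω := AlgebraicClosure K
  have hKinj : Function.Injective (algebraMap F[X] K) := IsFractionRing.injective F[X] K
  let φ : F[X] →+* Ω := (algebraMap K Ω).comp (algebraMap F[X] K)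
  have hφinj : Function.Injective φ := (algebraMap K Ω).injective.comp hKinj
  let gg : Fin n → K := fun i => algebraMap F[X] K (C (a i)) / algebraMap F[X] K (X + C (a i))
  have hX : ∀ i, algebraMap F[X] K (X + C (a i)) ≠ 0 := fun i =>
    (map_ne_zero_iff _ hKinj).2 (X_add_C_ne_zero _)
  choose w hw using fun i => IsAlgClosed.exists_pow_nat_eq (algebraMap K Ω (gg i)) hℓ.pos
  have hζK : IsPrimitiveRoot (algebraMap F[X] K (C ζ)) ℓ :=
    (hζ.map_of_injective C_injective).map_of_injective hKinj
  have hind := kummer_indep (Ω := Ω) hℓ n hζK gg w hw (by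
    rintro k ⟨b, hb⟩ i
    obtain ⟨u, v, hv, rfl⟩ := IsFractionRing.div_surjective (A := F[X]) b
    have hv0 : v ≠ 0 := nonZeroDivisors.ne_zero hv
    have hvK : algebraMap F[X] K v ≠ 0 := (map_ne_zero_iff _ hKinj).2 hv0
    have hc0 : (∏ i, a i ^ k i) ≠ 0 := Finset.prod_ne_zero_iff.2 fun i _ => pow_ne_zero _ (ha0 i)
    have hPne : (∏ i, (algebraMap F[X] K (X + C (a i))) ^ k i) ≠ 0 :=
      Finset.prod_ne_zero_iff.2 fun i _ => pow_ne_zero _ (hX i)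
    have hid : C (∏ i, a i ^ k i) * v ^ ℓ = u ^ ℓ * ∏ i, (X + C (a i)) ^ k i := by
      apply hKinj
      simp only [gg, div_pow, Finset.prod_div_distrib] at hb
      rw [div_eq_div_iff hPne (pow_ne_zero _ hvK)] at hb
      simp only [map_mul, map_pow, map_prod] at hb ⊢
      exact hb
    have hu0 : u ≠ 0 := by
      rintro rfl
      rw [zero_pow hℓ.ne_zero, zero_mul] at hid
      exact mul_ne_zero (C_ne_zero.2 hc0) (pow_ne_zero _ hv0) hid
    exact dvd_of_pow_identity a ha k _ hc0 u v hu0 hv0 hid i)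
  have hinj : ∀ f : (Fin n → Fin ℓ) → F[X], tev φ w f = 0 → f = 0 := by
    intro f hf
    have := (Fintype.linearIndependent_iff.1 hind) (fun e => algebraMap F[X] K (f e)) (by
      rw [← hf]
      unfold tev
      refine Finset.sum_congr rfl fun e _ => ?_
      rw [Algebra.smul_def]; rfl)
    funext e
    exact hKinj (by rw [this e]; simp)
  have hev := tev_tmul φ w a (fun i => by
    rw [hw]
    change algebraMap K Ω _ * _ = algebraMap K Ω _
    rw [← map_mul, mul_div_cancel₀ _ (hX i)]) f g
  have hz : tev φ w (tmul a f g) = 0 := by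
    rw [hfg]; simp [tev]
  rw [hz] at hev
  have hQ : φ (∏ h, (X + C (a h))) ≠ 0 := by
    rw [map_ne_zero_iff _ hφinj]
    exact Finset.prod_ne_zero_iff.2 fun i _ => X_add_C_ne_zero _
  rcases mul_eq_zero.1 ((mul_eq_zero.1 hev.symm).resolve_left hQ) with h | h
  · exact Or.inl (hinj f h)
  · exact Or.inr (hinj g h)

lemma nonvanish {p : ℕ} [Fact p.Prime] {ℓ n m : ℕ} (hℓ : ℓ.Prime) (hm : ℓ * m = p - 1)
    (a : Fin n → ZMod p) (ha : Function.Injective a) (ha0 : ∀ i, a i ≠ 0) (D : ℕ)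
    (f : (Fin n → Fin ℓ) → (ZMod p)[X]) (hf : ∀ e, f e ∈ degreeLT (ZMod p) D)
    (hdvd : X ^ p ∣ ∑ e, f e * ∏ h, ((X + C (a h)) ^ m) ^ (e h : ℕ))
    (hlt : ℓ ^ n * (D + n) < p) : f = 0 := by
  have : NeZero ℓ := ⟨hℓ.ne_zero⟩
  obtain ⟨ζ, hζ⟩ : ∃ ζ : ZMod p, IsPrimitiveRoot ζ ℓ := by
    obtain ⟨g, hg⟩ := IsCyclic.exists_ofOrder_eq_natCard (α := (ZMod p)ˣ)
    rw [Nat.card_eq_fintype_card, ZMod.card_units] at hg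
    have hp1 : p - 1 ≠ 0 := by have := (Fact.out : p.Prime).two_le; omega
    have h1 : IsPrimitiveRoot (g : ZMod p) (p - 1) := by
      rw [IsPrimitiveRoot.coe_units_iff, ← hg]
      exact IsPrimitiveRoot.orderOf g
    exact ⟨_, h1.pow (Nat.pos_of_ne_zero hp1) (by rw [mul_comm, hm])⟩
  refine nonvanish_abstract a p D (tuple_domain hℓ hζ a ha ha0) (fun h => (X + C (a h)) ^ m) ?_ f hf hdvd hlt
  intro h
  refine ⟨1, ?_⟩
  rw [← pow_mul, mul_comm m, hm, ← pow_succ', Nat.sub_add_cancel (Fact.out : p.Prime).one_le, add_pow_char,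
    ← C_pow, ZMod.pow_card]
  ring

end Domain
section Stepanov
open Polynomial

variable {F : Type} [Field F] {ℓ n : ℕ}

noncomputable def Qp (a : Fin n → F) : F[X] := ∏ h, (X + C (a h))

noncomputable def ccp (a : Fin n → F) (m : ℕ) (e : Fin n → Fin ℓ) : F[X] :=
  ∑ h, (((m * (e h : ℕ) : ℕ) : F[X])) * ∏ h' ∈ Finset.univ.erase h, (X + C (a h'))

noncomputable def Yp (a : Fin n → F) (m : ℕ) (e : Fin n → Fin ℓ) : F[X] :=
  ∏ h, ((X + C (a h)) ^ m) ^ (e h : ℕ)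

lemma Qp_derivative_Yp (a : Fin n → F) (m : ℕ) (e : Fin n → Fin ℓ) :
    Qp a * derivative (Yp a m e) = ccp a m e * Yp a m e := by
  unfold Qp Yp ccp
  rw [derivative_prod_finset, Finset.mul_sum, Finset.sum_mul]
  refine Finset.sum_congr rfl fun h _ => ?_
  rw [← Finset.mul_prod_erase _ (fun h => (X + C (a h))) (Finset.mem_univ h),
    ← Finset.mul_prod_erase _ (fun h => ((X + C (a h)) ^ m) ^ (e h : ℕ)) (Finset.mem_univ h)]
  have key : (X + C (a h)) * derivative (((X + C (a h)) ^ m) ^ (e h : ℕ)) =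
      ((m * (e h : ℕ) : ℕ) : F[X]) * ((X + C (a h)) ^ m) ^ (e h : ℕ) := by
    rw [← pow_mul]
    rcases Nat.eq_zero_or_pos (m * (e h : ℕ)) with h0 | h0
    · rw [h0]; simp
    · obtain ⟨k, hk⟩ : ∃ k, m * (e h : ℕ) = k + 1 := ⟨_, (Nat.sub_add_cancel h0).symm⟩
      rw [hk, derivative_pow]
      simp
      ring
  linear_combination (∏ h' ∈ Finset.univ.erase h, (X + C (a h'))) *
    (∏ h' ∈ Finset.univ.erase h, ((X + C (a h')) ^ m) ^ (e h' : ℕ)) * key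

noncomputable def dstep (a : Fin n → F) (m : ℕ) (e : Fin n → Fin ℓ) (i : ℕ) : F[X] →ₗ[F] F[X] :=
  (LinearMap.mulLeft F (Qp a)) ∘ₗ derivative + LinearMap.mulLeft F (ccp a m e - (i : F[X]) * derivative (Qp a))

lemma dstep_apply (a : Fin n → F) (m : ℕ) (e : Fin n → Fin ℓ) (i : ℕ) (g : F[X]) :
    dstep a m e i g = Qp a * derivative g + (ccp a m e - (i : F[X]) * derivative (Qp a)) * g := by
  simp [dstep]

noncomputable def diter (a : Fin n → F) (m : ℕ) (e : Fin n → Fin ℓ) : ℕ → F[X] →ₗ[F] F[X]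
  | 0 => LinearMap.id
  | i + 1 => dstep a m e i ∘ₗ diter a m e i

lemma diter_spec (a : Fin n → F) (m : ℕ) (e : Fin n → Fin ℓ) (g t : F[X]) (ht : derivative t = 0) (i : ℕ) :
    Qp a ^ i * derivative^[i] (g * t * Yp a m e) = diter a m e i g * t * Yp a m e := by
  induction i with
  | zero => simp [diter]
  | succ i ih =>
    rw [Function.iterate_succ_apply']
    have h1 := congrArg derivative ih
    have hY := Qp_derivative_Yp a m e
    simp only [diter, LinearMap.comp_apply, dstep_apply]
    set G := diter a m e i g
    set P := derivative^[i] (g * t * Yp a m e)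
    set Y := Yp a m e
    set Q := Qp a
    rw [derivative_mul, derivative_mul, derivative_mul, ht, derivative_pow] at h1
    have h2 : Q * (C (i : F) * Q ^ (i - 1) * derivative Q) = (i : F[X]) * derivative Q * Q ^ i := by
      rcases i with _ | i
      · simp
      · simp [pow_succ]; ring
    linear_combination Q * h1 + G * t * hY - (i : F[X]) * derivative Q * ih - P * h2

lemma natDegree_Qp (a : Fin n → F) : (Qp a).natDegree ≤ n := by
  unfold Qp
  refine (natDegree_prod_le _ _).trans ?_
  simp

lemma natDegree_ccp (a : Fin n → F) (m : ℕ) (e : Fin n → Fin ℓ) : (ccp a m e).natDegree ≤ n := by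
  unfold ccp
  refine natDegree_sum_le_of_forall_le _ _ fun h _ => ?_
  refine natDegree_mul_le.trans ?_
  rw [natDegree_natCast, zero_add]
  refine (natDegree_prod_le _ _).trans ?_
  simp

lemma dstep_mem (a : Fin n → F) (m : ℕ) (e : Fin n → Fin ℓ) (i : ℕ) (g : F[X]) (k : ℕ)
    (hg : g ∈ degreeLT F k) : dstep a m e i g ∈ degreeLT F (k + n) := by
  rw [dstep_apply]
  refine Submodule.add_mem _ ?_ ?_
  · rw [mul_comm]
    refine mul_mem_degreeLT ?_ (natDegree_Qp a)
    rw [mem_degreeLT] at *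
    exact lt_of_le_of_lt (degree_derivative_le) hg
  · rw [mul_comm]
    refine mul_mem_degreeLT hg ?_
    refine (natDegree_sub_le _ _).trans (max_le (natDegree_ccp a m e) ?_)
    refine natDegree_mul_le.trans ?_
    rw [natDegree_natCast, zero_add]
    exact (natDegree_derivative_le _).trans (by have := natDegree_Qp a; omega)

lemma diter_mem (a : Fin n → F) (m : ℕ) (e : Fin n → Fin ℓ) (i : ℕ) (g : F[X]) (k : ℕ)
    (hg : g ∈ degreeLT F k) : diter a m e i g ∈ degreeLT F (k + i * n) := by
  induction i with
  | zero => simpa [diter] using hg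
  | succ i ih =>
    have := dstep_mem a m e i _ _ ih
    simp only [diter, LinearMap.comp_apply]
    convert this using 2
    ring

lemma exists_tuple (a : Fin n → F) (m D J M : ℕ)
    (hcount : ∑ i ∈ Finset.range M, (D + J + i * n) < ℓ ^ n * J * D) :
    ∃ f : (Fin n → Fin ℓ) × Fin J → F[X], f ≠ 0 ∧ (∀ s, f s ∈ degreeLT F D) ∧
      ∀ i < M, ∑ s, diter a m s.1 i (f s) * X ^ (s.2 : ℕ) = 0 := by
  let T : ((Fin n → Fin ℓ) × Fin J → degreeLT F D) →ₗ[F] ((i : Fin M) → degreeLT F (D + J + i * n)) :=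
    { toFun := fun f i => ⟨∑ s, diter a m s.1 i (f s : F[X]) * X ^ (s.2 : ℕ),
        Submodule.sum_mem _ fun s _ => by
          have := mul_mem_degreeLT (diter_mem a m s.1 i _ _ (f s).2)
            (show (X ^ (s.2 : ℕ) : F[X]).natDegree ≤ J by rw [natDegree_X_pow]; exact s.2.2.le)
          convert this using 2
          ring⟩
      map_add' := by
        intro u v
        funext i
        apply Subtype.ext
        simp [add_mul, Finset.sum_add_distrib]
      map_smul' := by
        intro c u
        funext i
        apply Subtype.ext
        simp [Finset.smul_sum] }
  have fr : ∀ k, Module.finrank F (degreeLT F k) = k := fun k => by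
    rw [(degreeLTEquiv F k).finrank_eq]; simp
  have fin : ∀ k, Module.Finite F (degreeLT F k) := fun k =>
    Module.Finite.equiv (degreeLTEquiv F k).symm
  have hker : LinearMap.ker T ≠ ⊥ := by
    apply LinearMap.ker_ne_bot_of_finrank_lt
    rw [Module.finrank_pi_fintype, Module.finrank_pi_fintype]
    simp only [fr, Finset.sum_const, Finset.card_univ, smul_eq_mul, Fintype.card_prod, Fintype.card_fun,
      Fintype.card_fin]
    rw [Fin.sum_univ_eq_sum_range (fun i => D + J + i * n) M]
    exact hcount
  obtain ⟨f, hf, hf0⟩ := (Submodule.ne_bot_iff _).1 hker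
  refine ⟨fun s => (f s : F[X]), ?_, fun s => (f s).2, ?_⟩
  · intro h
    apply hf0
    funext s
    exact Subtype.ext (congrFun h s)
  · intro i hi
    have := congrFun (LinearMap.mem_ker.1 hf) ⟨i, hi⟩
    exact congrArg Subtype.val this

lemma stepanov_s18 {p : ℕ} [Fact p.Prime] {ℓ n m : ℕ} (hℓ : ℓ.Prime) (hm : ℓ * m = p - 1)
    (a : Fin n → ZMod p) (ha : Function.Injective a) (ha0 : ∀ i, a i ≠ 0) (D J M : ℕ)
    (hlt : ℓ ^ n * (D + n) < p) (hM : M ≤ p)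
    (hcount : ∑ i ∈ Finset.range M, (D + J + i * n) < ℓ ^ n * J * D)
    (A : Finset (ZMod p)) (hA : ∀ x ∈ A, ∀ h, (x + a h) ^ m = 1) :
    M * A.card ≤ p * (J + n) := by
  classical
  have hp : p.Prime := Fact.out
  have hm0 : m ≠ 0 := by
    rintro rfl
    have := hp.two_le
    omega
  obtain ⟨f, hf0, hfD, hfM⟩ := exists_tuple (ℓ := ℓ) a m D J M hcount
  set Φ : (ZMod p)[X] := ∑ s, f s * X ^ (p * (s.2 : ℕ)) * Yp a m s.1 with hΦ
  have hΦ0 : Φ ≠ 0 := by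
    intro hz
    apply hf0
    have main : ∀ j : ℕ, ∀ hj : j < J, (fun e => f (e, ⟨j, hj⟩)) = 0 := by
      intro j
      induction j using Nat.strong_induction_on with
      | _ j ih =>
        intro hj
        refine nonvanish hℓ hm a ha ha0 D _ (fun e => hfD _) ?_ hlt
        have h1 : Φ = X ^ (p * j) * (∑ e, f (e, ⟨j, hj⟩) * Yp a m e) +
            ∑ s ∈ Finset.univ.filter (fun s : (Fin n → Fin ℓ) × Fin J => s.2 ≠ ⟨j, hj⟩),
              f s * X ^ (p * (s.2 : ℕ)) * Yp a m s.1 := by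
          rw [hΦ, ← Finset.sum_filter_add_sum_filter_not _ (fun s : (Fin n → Fin ℓ) × Fin J => s.2 = ⟨j, hj⟩)]
          congr 1
          rw [Finset.mul_sum]
          symm
          refine Finset.sum_bij (fun e _ => (e, ⟨j, hj⟩)) ?_ ?_ ?_ ?_
          · simp
          · intro e _ e' _ h; simpa using h
          · rintro ⟨e, k⟩ h
            simp at h
            exact ⟨e, by simp, by simp [h]⟩
          · intro e _
            ring
        have h2 : X ^ (p * j) * X ^ p ∣ ∑ s ∈ Finset.univ.filter (fun s : (Fin n → Fin ℓ) × Fin J => s.2 ≠ ⟨j, hj⟩),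
              f s * X ^ (p * (s.2 : ℕ)) * Yp a m s.1 := by
          refine Finset.dvd_sum fun s hs => ?_
          obtain ⟨e, k, hk⟩ := s
          simp at hs
          rcases lt_trichotomy k j with hlt | heq | hgt
          · have := congrFun (ih k hlt hk) e
            simp only [Pi.zero_apply] at this
            rw [this]; simp
          · exact absurd heq hs
          · refine Dvd.dvd.mul_right (Dvd.dvd.mul_left ?_ _) _
            rw [← pow_add]
            refine pow_dvd_pow _ ?_
            calc p * j + p = p * (j + 1) := by ring
              _ ≤ p * k := Nat.mul_le_mul_left _ hgt
        rw [hz] at h1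
        have h3 : X ^ (p * j) * X ^ p ∣ X ^ (p * j) * (∑ e, f (e, ⟨j, hj⟩) * Yp a m e) := by
          rw [eq_neg_of_add_eq_zero_left h1.symm]
          exact (dvd_neg).2 h2
        exact (mul_dvd_mul_iff_left (pow_ne_zero _ X_ne_zero)).1 h3
    funext s
    obtain ⟨e, k, hk⟩ := s
    exact congrFun (main k hk) e
  have hD : D ≤ p := by
    have : 1 ≤ ℓ ^ n := Nat.one_le_pow _ _ hℓ.pos
    nlinarith
  have hdeg : Φ.natDegree ≤ p * (J + n) := by
    refine natDegree_sum_le_of_forall_le _ _ fun s _ => ?_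
    have h1 : (f s).natDegree ≤ p := by
      have := hfD s
      rw [mem_degreeLT] at this
      exact (natDegree_le_of_degree_le this.le).trans hD
    have h2 : (Yp a m s.1).natDegree ≤ p * n := by
      unfold Yp
      refine (natDegree_prod_le _ _).trans ?_
      calc _ ≤ ∑ h : Fin n, p := Finset.sum_le_sum fun h _ => by
            rw [← pow_mul]
            refine natDegree_pow_le.trans ?_
            rw [natDegree_X_add_C, mul_one]
            have := (s.1 h).2
            calc m * (s.1 h : ℕ) ≤ m * ℓ := Nat.mul_le_mul_left _ this.le
              _ ≤ p := by rw [mul_comm, hm]; omega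
        _ = p * n := by simp [mul_comm]
    have h3 := s.2.2
    calc _ ≤ (f s).natDegree + (X ^ (p * (s.2 : ℕ)) : (ZMod p)[X]).natDegree + (Yp a m s.1).natDegree :=
          natDegree_mul_le.trans (Nat.add_le_add_right natDegree_mul_le _)
      _ ≤ p + p * s.2 + p * n := by
          rw [natDegree_X_pow]; omega
      _ = p * (s.2 + 1 + n) := by ring
      _ ≤ p * (J + n) := Nat.mul_le_mul_left _ (by omega)
  have hmult : ∀ x ∈ A, M ≤ rootMultiplicity x Φ := by
    intro x hx
    rcases Nat.eq_zero_or_pos M with h0 | hMpos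
    · omega
    have : M - 1 < rootMultiplicity x Φ := by
      rw [lt_rootMultiplicity_iff_isRoot_iterate_derivative_of_mem_nonZeroDivisors hΦ0]
      · intro i hi
        have hi' : i < M := by omega
        have h1 : Qp a ^ i * derivative^[i] Φ = ∑ s, diter a m s.1 i (f s) * X ^ (p * (s.2 : ℕ)) * Yp a m s.1 := by
          rw [hΦ, iterate_derivative_sum, Finset.mul_sum]
          refine Finset.sum_congr rfl fun s _ => ?_
          refine diter_spec a m s.1 (f s) _ ?_ i
          rw [derivative_X_pow]
          simp
        have h2 := congrArg (eval x) h1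
        have hY : ∀ e : Fin n → Fin ℓ, eval x (Yp a m e) = 1 := by
          intro e
          unfold Yp
          rw [eval_prod]
          refine Finset.prod_eq_one fun h _ => ?_
          simp [hA x hx h]
        have h3 := congrArg (eval x) (hfM i hi')
        rw [eval_finsetSum] at h2 h3
        simp only [eval_mul, eval_pow, eval_X, hY, mul_one, pow_mul, ZMod.pow_card, eval_zero] at h2 h3
        rw [h3] at h2
        have hQ : eval x (Qp a) ≠ 0 := by
          unfold Qp
          rw [eval_prod, Finset.prod_ne_zero_iff]
          intro h _ h0
          have := hA x hx h
          simp at h0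
          rw [h0, zero_pow hm0] at this
          exact zero_ne_one this
        exact (mul_eq_zero.1 h2).resolve_left (pow_ne_zero _ hQ)
      · rw [mem_nonZeroDivisors_iff_ne_zero, Ne, ZMod.natCast_eq_zero_iff, hp.dvd_factorial]
        omega
    omega
  have hle : M • A.val ≤ Φ.roots := by
    rw [Multiset.le_iff_count]
    intro x
    rw [Multiset.count_nsmul, count_roots]
    by_cases hx : x ∈ A
    · rw [Multiset.count_eq_one_of_mem A.nodup hx, mul_one]
      exact hmult x hx
    · rw [Multiset.count_eq_zero_of_notMem hx]; simp
  have := Multiset.card_le_card hle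
  rw [Multiset.card_nsmul] at this
  calc M * A.card ≤ Multiset.card Φ.roots := by simpa using this
    _ ≤ Φ.natDegree := card_roots' _
    _ ≤ _ := hdeg

end Stepanov

section Lower

lemma char_to_pow {p : ℕ} [Fact p.Prime] (χ : DirichletCharacter ℂ p) (hχ : χ ≠ 1) :
    ∃ ℓ m : ℕ, ℓ.Prime ∧ ℓ * m = p - 1 ∧ ∀ u : ZMod p, χ u = 1 → u ^ m = 1 := by
  obtain ⟨g, hg⟩ := IsCyclic.exists_generator (α := (ZMod p)ˣ)
  have hgp : g ^ (p - 1) = 1 := ZMod.units_pow_card_sub_one_eq_one p g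
  have hne : χ (g : ZMod p) ≠ 1 := by
    intro h
    apply hχ
    apply MulChar.ext
    intro u
    obtain ⟨k, rfl⟩ := (mem_powers_iff_mem_zpowers).2 (hg u)
    simp [h]
  have hk1 : orderOf (χ (g : ZMod p)) ≠ 1 := fun h => hne (orderOf_eq_one_iff.1 h)
  have hdvd : orderOf (χ (g : ZMod p)) ∣ p - 1 := by
    apply orderOf_dvd_of_pow_eq_one
    rw [← map_pow, ← Units.val_pow_eq_pow_val, hgp]; simp
  set k := orderOf (χ (g : ZMod p))
  have hℓk : k.minFac ∣ k := k.minFac_dvd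
  obtain ⟨m, hm⟩ := hℓk.trans hdvd
  refine ⟨k.minFac, m, Nat.minFac_prime hk1, hm.symm, ?_⟩
  intro u hu
  have hu0 : IsUnit u := by
    by_contra h
    rw [MulChar.map_nonunit χ h] at hu
    exact zero_ne_one hu
  obtain ⟨u, rfl⟩ := hu0
  obtain ⟨j, rfl⟩ := (mem_powers_iff_mem_zpowers).2 (hg u)
  simp only [Units.val_pow_eq_pow_val, map_pow] at hu
  have h1 : k ∣ j := orderOf_dvd_of_pow_eq_one hu
  obtain ⟨c, rfl⟩ := hℓk.trans h1
  have : (g ^ (k.minFac * c)) ^ m = 1 := by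
    rw [← pow_mul, show k.minFac * c * m = (p - 1) * c by rw [hm]; ring, pow_mul, hgp, one_pow]
  rw [← Units.val_pow_eq_pow_val, this]; rfl

lemma totient_sum (X : ℕ) : ∑ q ∈ Finset.Icc 1 X, q.totient * (X / q) = X * (X + 1) / 2 := by
  have h1 : ∑ N ∈ Finset.Icc 1 X, N = X * (X + 1) / 2 := by
    have : (∑ N ∈ Finset.Icc 1 X, N) * 2 = X * (X + 1) := by
      induction X with
      | zero => simp
      | succ X ih =>
        rw [Finset.sum_Icc_succ_top (by omega), add_mul, ih]
        ring
    omega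
  rw [← h1]
  have h2 : ∀ N ∈ Finset.Icc 1 X, N = ∑ q ∈ Finset.Icc 1 X, if q ∣ N then q.totient else 0 := by
    intro N hN
    rw [Finset.mem_Icc] at hN
    conv_lhs => rw [← Nat.sum_totient N]
    rw [← Finset.sum_filter]
    refine Finset.sum_congr ?_ fun _ _ => rfl
    ext d
    simp only [Nat.mem_divisors, Finset.mem_filter, Finset.mem_Icc]
    constructor
    · rintro ⟨h, _⟩
      exact ⟨⟨Nat.pos_of_dvd_of_pos h (by omega), (Nat.le_of_dvd (by omega) h).trans hN.2⟩, h⟩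
    · rintro ⟨_, h⟩
      exact ⟨h, by omega⟩
  rw [Finset.sum_congr rfl h2, Finset.sum_comm]
  refine Finset.sum_congr rfl fun q hq => ?_
  rw [← Finset.sum_filter, Finset.sum_const, smul_eq_mul, mul_comm]
  congr 1
  have := Nat.card_multiples X q
  rw [← Nat.Ioc_filter_dvd_card_eq_div]
  rfl

set_option maxHeartbeats 1000000 in
lemma lower_count {p : ℕ} [Fact p.Prime] (m B H : ℕ) (hH : 1 ≤ H) (hBH : 2 * H ≤ B) (hBp : B ^ 2 < p)
    (hG : ∀ N : ℕ, 1 ≤ N → N ≤ B → (N : ZMod p) ^ m = 1) :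
    ∃ A : Finset (ZMod p), (∀ x ∈ A, ∀ h : Fin H, (x + ((h : ℕ) + 1 : ℕ)) ^ m = 1) ∧
      (B : ℝ) ^ 2 ≤ 8 * H * A.card := by
  classical
  have hp : p.Prime := Fact.out
  set X := B / (2 * H) with hX
  have hX1 : 1 ≤ X := by rw [hX, Nat.le_div_iff_mul_le (by omega)]; omega
  have hXB : X ≤ B := Nat.div_le_self _ _
  have hBlt : B < p := by nlinarith
  let S : Finset (Σ _ : ℕ, ℕ × ℕ) := (Finset.Icc 1 X).sigma fun q =>
    ((Finset.range q).filter (fun a => q.Coprime a)) ×ˢ Finset.range (B / q + 1 - H)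
  let ψ : (Σ _ : ℕ, ℕ × ℕ) → ZMod p := fun t => ((t.2.1 * p / t.1 + t.2.2 : ℕ) : ZMod p)
  have hmem : ∀ t, t ∈ S ↔ (1 ≤ t.1 ∧ t.1 ≤ X) ∧ (t.2.1 < t.1 ∧ t.1.Coprime t.2.1) ∧ t.2.2 < B / t.1 + 1 - H := by
    intro t
    simp [S]
  have key : ∀ t ∈ S, ∀ h, 1 ≤ h → h ≤ H → ∃ N, 1 ≤ N ∧ N ≤ B ∧
      t.1 * (t.2.1 * p / t.1 + t.2.2 + h) = t.2.1 * p + N := by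
    rintro ⟨q, a, i⟩ ht h h1 h2
    rw [hmem] at ht
    obtain ⟨⟨hq1, hqX⟩, ⟨haq, hcop⟩, hi⟩ := ht
    dsimp only at *
    have hd := Nat.div_add_mod (a * p) q
    have hr := Nat.mod_lt (a * p) (show q > 0 by omega)
    have hB := Nat.mul_div_le B q
    set d := a * p / q
    set r := a * p % q
    have h3 : i + h ≤ B / q := by omega
    have h4 : q * (i + h) ≤ q * (B / q) := Nat.mul_le_mul_left _ h3
    have h5 : q * 1 ≤ q * (i + h) := Nat.mul_le_mul_left _ (by omega)
    refine ⟨q * (i + h) - r, by omega, by omega, ?_⟩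
    have h6 : q * (d + i + h) = q * d + q * (i + h) := by ring
    omega
  have hlt : ∀ t ∈ S, t.2.1 * p / t.1 + t.2.2 < p := by
    intro t ht
    obtain ⟨N, hN1, hNB, hN⟩ := key t ht 1 le_rfl hH
    rw [hmem] at ht
    obtain ⟨⟨hq1, hqX⟩, ⟨haq, hcop⟩, hi⟩ := ht
    by_contra hge
    push Not at hge
    have h1 : t.1 * (p + 1) ≤ t.1 * (t.2.1 * p / t.1 + t.2.2 + 1) := Nat.mul_le_mul_left _ (by omega)
    have h2 : (t.2.1 + 1) * p ≤ t.1 * p := Nat.mul_le_mul_right _ haq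
    nlinarith
  refine ⟨S.image ψ, ?_, ?_⟩
  · intro x hx h
    obtain ⟨t, ht, rfl⟩ := Finset.mem_image.1 hx
    obtain ⟨N, hN1, hNB, hN⟩ := key t ht (h + 1) (by omega) (by omega)
    rw [hmem] at ht
    have h1 := hG N hN1 hNB
    have h2 := hG t.1 ht.1.1 (ht.1.2.trans hXB)
    have h3 := congrArg (fun n : ℕ => (n : ZMod p)) hN
    simp only [Nat.cast_mul, Nat.cast_add, CharP.cast_eq_zero, mul_zero, zero_add] at h3
    have h4 := congrArg (fun z => z ^ m) h3
    simp only [mul_pow, h1, h2, one_mul] at h4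
    simpa [ψ] using h4
  · have hinj : Set.InjOn ψ S := by
      intro t ht t' ht' heq
      have e1 : t.2.1 * p / t.1 + t.2.2 = t'.2.1 * p / t'.1 + t'.2.2 := by
        have := (ZMod.natCast_eq_natCast_iff' _ _ _).1 heq
        rwa [Nat.mod_eq_of_lt (hlt t ht), Nat.mod_eq_of_lt (hlt t' ht')] at this
      obtain ⟨N, hN1, hNB, hN⟩ := key t ht 1 le_rfl hH
      obtain ⟨N', hN1', hNB', hN'⟩ := key t' ht' 1 le_rfl hH
      rw [← e1] at hN'
      have m1 := (hmem t).1 ht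
      have m2 := (hmem t').1 ht'
      obtain ⟨q, a, i⟩ := t
      obtain ⟨q', a', i'⟩ := t'
      dsimp only at *
      set x := a * p / q + i
      have e2 : (q' : ℤ) * N - q * N' = p * (a' * q - a * q') := by
        have z1 : (q : ℤ) * (x + 1) = a * p + N := by exact_mod_cast hN
        have z2 : (q' : ℤ) * (x + 1) = a' * p + N' := by exact_mod_cast hN'
        linear_combination q * z2 - q' * z1
      have b1 : q' * N ≤ B * B := Nat.mul_le_mul (m2.1.2.trans hXB) hNB
      have b2 : q * N' ≤ B * B := Nat.mul_le_mul (m1.1.2.trans hXB) hNB'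
      have b3 : (a' * q - a * q' : ℤ) = 0 := by
        have : |(p : ℤ) * (a' * q - a * q')| < p := by
          rw [← e2, abs_lt]
          rw [sq] at hBp
          zify at b1 b2 hBp
          have n1 : (0 : ℤ) ≤ q' * N := by positivity
          have n2 : (0 : ℤ) ≤ q * N' := by positivity
          constructor <;> linarith
        by_contra hne
        have h1 : 1 ≤ |(a' * q - a * q' : ℤ)| := Int.one_le_abs hne
        rw [abs_mul, Nat.abs_cast] at this
        have hpp : (0 : ℤ) < p := by exact_mod_cast hp.pos
        exact absurd this (not_lt.2 (le_mul_of_one_le_right hpp.le h1))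
      have b4 : a' * q = a * q' := by
        have : (a' * q : ℤ) = a * q' := by linarith
        exact_mod_cast this
      have d1 : q ∣ q' := m1.2.1.2.dvd_of_dvd_mul_left (Dvd.intro_left _ b4)
      have d2 : q' ∣ q := m2.2.1.2.dvd_of_dvd_mul_left (Dvd.intro_left _ b4.symm)
      obtain rfl := Nat.dvd_antisymm d1 d2
      have : a' = a := Nat.eq_of_mul_eq_mul_right (by omega) b4
      subst this
      have : i = i' := by omega
      subst this
      rfl
    rw [Finset.card_image_of_injOn hinj]
    have hcard : (S.card : ℝ) = ∑ q ∈ Finset.Icc 1 X, (q.totient : ℝ) * ((B / q + 1 - H : ℕ) : ℝ) := by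
      rw [Finset.card_sigma]
      push_cast
      refine Finset.sum_congr rfl fun q _ => ?_
      rw [Finset.card_product, Finset.card_range, Nat.totient]
      push_cast
      rfl
    have hHr : (1 : ℝ) ≤ H := by exact_mod_cast hH
    have hXr : (B : ℝ) < 2 * H * (X + 1) := by
      have := Nat.lt_mul_div_succ B (show 0 < 2 * H by omega)
      exact_mod_cast this
    have hXr2 : (2 * H * X : ℝ) ≤ B := by
      have := Nat.mul_div_le B (2 * H)
      exact_mod_cast this
    have hX1r : (1 : ℝ) ≤ X := by exact_mod_cast hX1
    have hterm : ∀ q ∈ Finset.Icc 1 X, (H : ℝ) * ((q.totient * (X / q) : ℕ) : ℝ) * (B / (2 * H * X)) ≤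
        (q.totient : ℝ) * ((B / q + 1 - H : ℕ) : ℝ) := by
      intro q hq
      rw [Finset.mem_Icc] at hq
      have hq0 : (1 : ℝ) ≤ q := by exact_mod_cast hq.1
      have hqX : (q : ℝ) ≤ X := by exact_mod_cast hq.2
      have t1 : ((X / q : ℕ) : ℝ) ≤ (X : ℝ) / q := Nat.cast_div_le
      have t2 : (B : ℝ) / q < ((B / q : ℕ) : ℝ) + 1 := by
        rw [div_lt_iff₀ (by linarith)]
        have := Nat.lt_mul_div_succ B (show 0 < q by omega)
        have : (B : ℝ) < q * ((B / q : ℕ) + 1) := by exact_mod_cast this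
        linarith
      have t3 : (B : ℝ) / q - H ≤ ((B / q + 1 - H : ℕ) : ℝ) := by
        have : ((B / q : ℕ) : ℝ) + 1 ≤ ((B / q + 1 - H : ℕ) : ℝ) + H := by
          exact_mod_cast (by omega : B / q + 1 ≤ B / q + 1 - H + H)
        linarith
      have t4 : (H : ℝ) ≤ B / q / 2 := by
        rw [div_div, le_div_iff₀ (by linarith)]
        nlinarith
      have t5 : (H : ℝ) * ((X / q : ℕ) : ℝ) * (B / (2 * H * X)) ≤ B / q / 2 := by
        calc (H : ℝ) * ((X / q : ℕ) : ℝ) * (B / (2 * H * X)) ≤ H * (X / q) * (B / (2 * H * X)) := by gcongr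
          _ = B / q / 2 := by field_simp
      push_cast
      have : (0 : ℝ) ≤ q.totient := by positivity
      calc _ = (q.totient : ℝ) * ((H : ℝ) * ((X / q : ℕ) : ℝ) * (B / (2 * H * X))) := by ring
        _ ≤ _ := by gcongr; linarith
    have hsum := Finset.sum_le_sum hterm
    rw [← hcard, ← Finset.sum_mul, ← Finset.mul_sum, ← Nat.cast_sum, totient_sum] at hsum
    have h2 : ((X * (X + 1) / 2 : ℕ) : ℝ) = X * (X + 1) / 2 := by
      rw [Nat.cast_div (Nat.even_mul_succ_self X).two_dvd (by norm_num)]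
      push_cast
      ring
    rw [h2] at hsum
    have h3 : (H : ℝ) * (X * (X + 1) / 2) * (B / (2 * H * X)) = (X + 1) * B / 4 := by
      field_simp
      ring
    rw [h3] at hsum
    have hB0 : (0 : ℝ) ≤ B := by positivity
    nlinarith [mul_le_mul_of_nonneg_left hsum (show (0 : ℝ) ≤ 8 * H by linarith), mul_le_mul_of_nonneg_left hXr.le hB0]

end Lower

section Final

theorem res_below {p : ℕ} [Fact p.Prime] (χ : DirichletCharacter ℂ p) (q₁ : ℕ)
    (hmin₁ : ∀ q : ℕ, q.Prime → χ (q : ZMod p) ∉ ({0, 1} : Set ℂ) → q₁ ≤ q) :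
    ∀ N : ℕ, 1 ≤ N → N < q₁ → N < p → χ (N : ZMod p) = 1 := by
  intro N
  induction N using Nat.strong_induction_on with
  | _ N ih =>
    intro h1 h2 h3
    rcases Nat.eq_or_lt_of_le h1 with h | h
    · rw [← h]; simp
    · have hq : (N.minFac).Prime := Nat.minFac_prime (by omega)
      have hqle : N.minFac ≤ N := Nat.minFac_le (by omega)
      have hne : χ (N.minFac : ZMod p) ≠ 0 := by
        have hc : Nat.Coprime N.minFac p := by
          refine (Nat.coprime_of_lt_prime hq.pos.ne' (by omega) Fact.out).symm
        have := (ZMod.isUnit_iff_coprime N.minFac p).2 hc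
        exact (this.map χ).ne_zero
      have h1' : χ (N.minFac : ZMod p) = 1 := by
        by_contra hc
        have := hmin₁ _ hq (by simp [hne, hc])
        omega
      have hmul : N.minFac * (N / N.minFac) = N := Nat.mul_div_cancel' (Nat.minFac_dvd N)
      have hlt : N / N.minFac < N := Nat.div_lt_self (by omega) hq.one_lt
      have hpos : 1 ≤ N / N.minFac := Nat.div_pos hqle hq.pos
      have := ih _ hlt hpos (by omega) (by omega)
      rw [← hmul, Nat.cast_mul, map_mul, h1', this, one_mul]

theorem q_lt_p {p : ℕ} [Fact p.Prime] (χ : DirichletCharacter ℂ p) (hχ : χ ≠ 1) (q₁ : ℕ)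
    (hmin₁ : ∀ q : ℕ, q.Prime → χ (q : ZMod p) ∉ ({0, 1} : Set ℂ) → q₁ ≤ q) : q₁ < p := by
  by_contra hle
  push Not at hle
  apply hχ
  ext u
  have hne : (u : ZMod p).val ≠ 0 := by
    rw [Ne, ZMod.val_eq_zero]
    exact u.ne_zero
  have hlt := ZMod.val_lt (u : ZMod p)
  have := res_below χ q₁ hmin₁ (u : ZMod p).val (by omega) (by omega) hlt
  rw [ZMod.natCast_zmod_val] at this
  rw [this, MulChar.one_apply_coe]

theorem elem_bound {p : ℕ} [Fact p.Prime] (χ : DirichletCharacter ℂ p) (hχ : χ ≠ 1)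
    (q₁ : ℕ) (hq₁ : q₁.Prime)
    (hnr₁ : χ (q₁ : ZMod p) ∉ ({0, 1} : Set ℂ))
    (hmin₁ : ∀ q : ℕ, q.Prime → χ (q : ZMod p) ∉ ({0, 1} : Set ℂ) → q₁ ≤ q) :
    q₁ * (q₁ - 1) ≤ p := by
  have hlt := q_lt_p χ hχ q₁ hmin₁
  have hdm := Nat.div_add_mod p q₁
  have hml := Nat.mod_lt p hq₁.pos
  have hm0 : p % q₁ ≠ 0 := by
    intro h
    have := (Nat.prime_dvd_prime_iff_eq hq₁ (Fact.out : p.Prime)).1 (Nat.dvd_of_mod_eq_zero h)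
    omega
  have hk : q₁ ≤ p / q₁ + 1 := by
    by_contra hc
    push Not at hc
    have e1 := res_below χ q₁ hmin₁ (p / q₁ + 1) (Nat.le_add_left 1 _) hc (by omega)
    have e2 := res_below χ q₁ hmin₁ (q₁ - p % q₁) (by omega) (by omega) (by omega)
    have e3 : (p / q₁ + 1) * q₁ = p + (q₁ - p % q₁) := by
      have : (p / q₁ + 1) * q₁ = q₁ * (p / q₁) + q₁ := by ring
      omega
    have e4 : (((p / q₁ + 1 : ℕ) : ZMod p)) * (q₁ : ZMod p) = ((q₁ - p % q₁ : ℕ) : ZMod p) := by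
      rw [← Nat.cast_mul, e3, Nat.cast_add, CharP.cast_eq_zero, zero_add]
    rw [← e4, map_mul, e1, one_mul] at e2
    exact hnr₁ (by simp [e2])
  calc q₁ * (q₁ - 1) ≤ q₁ * (p / q₁) := Nat.mul_le_mul_left _ (by omega)
    _ ≤ p := Nat.mul_div_le p q₁

theorem small_num (t : ℝ) (h1 : 1.3 ≤ t) (h2 : t ≤ 64) : t ^ 2 + 1 < 18.8 * t * Real.log t := by
  rcases le_total t 16 with h | h
  · have hl : 1 - t⁻¹ ≤ Real.log t := Real.one_sub_inv_le_log_of_pos (by linarith)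
    have : t * (1 - t⁻¹) = t - 1 := by field_simp
    have := mul_le_mul_of_nonneg_left hl (show 0 ≤ t by linarith)
    nlinarith
  · have hl : 1 - (t / 16)⁻¹ ≤ Real.log (t / 16) := Real.one_sub_inv_le_log_of_pos (by linarith)
    rw [Real.log_div (by linarith) (by norm_num)] at hl
    have h16 : Real.log 16 = 4 * Real.log 2 := by
      rw [show (16 : ℝ) = 2 ^ 4 by norm_num, Real.log_pow]; norm_num
    have := Real.log_two_gt_d9
    have hl2 : 3.77 - (t / 16)⁻¹ ≤ Real.log t := by linarith
    have e : t * (3.77 - (t / 16)⁻¹) = 3.77 * t - 16 := by field_simp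
    have := mul_le_mul_of_nonneg_left hl2 (show 0 ≤ t by linarith)
    nlinarith

theorem sum_id (M c n : ℕ) : 2 * ∑ i ∈ Finset.range M, (c + i * n) + n * M = 2 * M * c + n * M ^ 2 := by
  induction M with
  | zero => simp
  | succ k ih => rw [Finset.sum_range_succ]; linarith

set_option maxHeartbeats 1000000 in
theorem large_case {p : ℕ} [Fact p.Prime] (T L : ℝ) (B ℓ m : ℕ) (hT : 64 ≤ T) (hTp : T ^ 4 = p)
    (hL : L = Real.log p) (hBp : B ^ 2 < p) (hB : 4.7 * T * L ≤ B + 1)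
    (hℓ : ℓ.Prime) (hm : ℓ * m = p - 1)
    (hG : ∀ N : ℕ, 1 ≤ N → N ≤ B → (N : ZMod p) ^ m = 1) : False := by
  have hp1 : 1 < p := (Fact.out : p.Prime).one_lt
  have hL4 : L = 4 * Real.log T := by
    rw [hL, ← hTp, Real.log_pow]; norm_num
  have hl2 := Real.log_two_gt_d9
  have hl2' := Real.log_two_lt_d9
  have hL16 : 16.6 ≤ L := by
    have : Real.log 64 ≤ Real.log T := Real.log_le_log (by norm_num) hT
    rw [show (64 : ℝ) = 2 ^ 6 by norm_num, Real.log_pow] at this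
    push_cast at this
    linarith
  have hTL : 1000 ≤ T * L := by nlinarith
  have hB' : 4.69 * (T * L) ≤ B := by linarith
  have hBsq : 21.9 * (T * L) ^ 2 ≤ (B : ℝ) ^ 2 := by nlinarith
  have hT2 : 4096 ≤ T ^ 2 := by nlinarith
  have hℓ0 : (0 : ℝ) < ℓ := by exact_mod_cast hℓ.pos
  have hmR : (ℓ : ℝ) * m ≤ p := by exact_mod_cast (by omega : ℓ * m ≤ p)
  have hm0 : 0 < m := by
    rcases Nat.eq_zero_or_pos m with h | h
    · subst h; omega
    · exact h
  by_cases hcase : T ^ 2 < 16 * L * ℓ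
  · obtain ⟨A, hA, hAc⟩ := lower_count (p := p) m B 1 le_rfl
      (by have : (2 : ℝ) ≤ B := by linarith
          exact_mod_cast this) hBp hG
    have hcard : A.card ≤ m := by
      have hsub : (A.image (fun x => x + 1)) ⊆ (Polynomial.nthRoots m (1 : ZMod p)).toFinset := by
        intro y hy
        obtain ⟨x, hx, rfl⟩ := Finset.mem_image.1 hy
        rw [Multiset.mem_toFinset, Polynomial.mem_nthRoots hm0]
        simpa using hA x hx 0
      have h1 := Finset.card_le_card hsub
      rw [Finset.card_image_of_injective _ (add_left_injective 1)] at h1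
      exact h1.trans ((Multiset.toFinset_card_le _).trans (Polynomial.card_nthRoots m 1))
    have hcR : (A.card : ℝ) ≤ m := by exact_mod_cast hcard
    have hm1 : (m : ℝ) ≤ 16 * L * T ^ 2 := by
      have h1 : (ℓ : ℝ) * m ≤ T ^ 2 * T ^ 2 := by rw [← hTp] at hmR; linarith
      have h2 : T ^ 2 * T ^ 2 ≤ (16 * L * ℓ) * T ^ 2 := by gcongr
      have h3 : (ℓ : ℝ) * m ≤ ℓ * (16 * L * T ^ 2) := by linarith
      exact le_of_mul_le_mul_left h3 hℓ0
    push_cast at hAc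
    have : 21.9 * (T * L) ^ 2 ≤ 128 * (L * T ^ 2) := by linarith
    have h5 : 0 < L * T ^ 2 := by positivity
    nlinarith
  · push Not at hcase
    set s := Nat.sqrt p with hs
    have hs1 : (s : ℝ) ≤ T ^ 2 := by
      have h : s * s ≤ p := Nat.sqrt_le p
      have h : (s : ℝ) * s ≤ p := by exact_mod_cast h
      rw [← hTp] at h
      nlinarith
    have hs2 : T ^ 2 < s + 1 := by
      have h : p < (s + 1) * (s + 1) := Nat.lt_succ_sqrt p
      have h : (p : ℝ) < (s + 1) * (s + 1) := by exact_mod_cast h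
      rw [← hTp] at h
      nlinarith
    set H := Nat.clog ℓ (4 * s) with hH
    have hs4 : (4095 : ℝ) < s := by linarith
    have hs4n : 4095 < s := by exact_mod_cast hs4
    have hH1 : 1 ≤ H := Nat.clog_pos hℓ.one_lt (by omega)
    have hr1 : 4 * s ≤ ℓ ^ H := Nat.le_pow_clog hℓ.one_lt _
    have hr2 : ℓ ^ (H - 1) < 4 * s := Nat.pow_pred_clog_lt_self hℓ.one_lt (by omega)
    set r := ℓ ^ H with hr
    have hr3 : r < 4 * s * ℓ := by
      have : r = ℓ ^ (H - 1) * ℓ := by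
        rw [hr, ← pow_succ]; congr 1; omega
      rw [this]
      exact Nat.mul_lt_mul_of_pos_right hr2 hℓ.pos
    have hr3R : (r : ℝ) < 4 * s * ℓ := by exact_mod_cast hr3
    have hrp : 4 * L * (r : ℝ) ≤ p := by
      rw [← hTp]
      have a1 : 4 * L * (r : ℝ) ≤ 4 * L * (4 * s * ℓ) := by gcongr
      have a2 : 4 * L * (4 * s * ℓ) = (16 * L * ℓ) * s := by ring
      have a3 : (16 * L * ℓ) * s ≤ T ^ 2 * T ^ 2 := by gcongr
      linarith
    have hHL : (H : ℝ) ≤ 3 + 0.7214 * L := by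
      have b1 : 2 ^ (H - 1) ≤ 4 * s := (Nat.pow_le_pow_left hℓ.two_le _).trans hr2.le
      have b2 : (2 : ℝ) ^ (H - 1) ≤ 4 * s := by exact_mod_cast b1
      have b3 : (2 : ℝ) ^ (H - 1) ≤ 2 ^ 2 * T ^ 2 := by linarith
      have b4 := Real.log_le_log (by positivity) b3
      rw [Real.log_mul (by norm_num) (by positivity), Real.log_pow, Real.log_pow, Real.log_pow,
        Nat.cast_sub hH1] at b4
      push_cast at b4
      have b5 : ((H : ℝ) - 3) * Real.log 2 ≤ L / 2 := by rw [hL4]; linarith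
      nlinarith
    have hH9 : (H : ℝ) ≤ 0.9022 * L := by linarith
    have hHL1 : (H : ℝ) + 1 ≤ L := by linarith
    have hrH : 4 * ((r : ℝ) * (H + 1)) ≤ p := by
      have : (r : ℝ) * (H + 1) ≤ r * L := by gcongr
      linarith
    have hrHn : 4 * (r * (H + 1)) ≤ p := by exact_mod_cast hrH
    have hr0 : 0 < r := by omega
    have hHd : H ≤ (p - 1) / r := by
      rw [Nat.le_div_iff_mul_le hr0]
      have : H * r + r = r * (H + 1) := by ring
      omega
    set D := (p - 1) / r - H with hD
    have hDH : D + H = (p - 1) / r := by omega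
    have hlt : r * (D + H) < p := by
      rw [hDH]
      have := Nat.mul_div_le (p - 1) r
      omega
    have hge : p ≤ r * (D + H) + r := by
      rw [hDH]
      have := Nat.lt_mul_div_succ (p - 1) hr0
      have e : r * ((p - 1) / r + 1) = r * ((p - 1) / r) + r := by ring
      omega
    have hrD : 3 * p ≤ 4 * (r * D) := by
      have e : r * (D + H) + r = r * D + r * (H + 1) := by ring
      omega
    have hsp : s * s ≤ p := Nat.sqrt_le p
    have hs16 : 4095 * s ≤ p := by nlinarith
    have hcount : ∑ i ∈ Finset.range s, (D + H + i * H) < r * H * D := by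
      have e := sum_id s (D + H) H
      have c1 : 4 * (s * D) ≤ r * D := by
        calc 4 * (s * D) = (4 * s) * D := by ring
          _ ≤ r * D := by gcongr
      have c2 : 4 * (s * D) ≤ H * (r * D) := c1.trans (Nat.le_mul_of_pos_left _ hH1)
      have c3 : H * (16 * s + 8 * (s * s)) < H * (12 * (r * D)) := by
        apply Nat.mul_lt_mul_of_pos_left _ hH1
        omega
      clear_value D r H s
      have c4 : r * H * D = H * (r * D) := by ring
      rw [c4]
      have c5 : 2 * s * (D + H) = 2 * (s * D) + 2 * (s * H) := by ring
      have c6 : H * (16 * s + 8 * (s * s)) = 16 * (s * H) + 8 * (H * s ^ 2) := by ring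
      have c7 : H * (12 * (r * D)) = 12 * (H * (r * D)) := by ring
      rw [c5] at e
      rw [c6, c7] at c3
      omega
    have hHB : 2 * H ≤ B := by
      have : 2 * (H : ℝ) ≤ B := by nlinarith
      exact_mod_cast this
    have hHp : H < p := by nlinarith
    obtain ⟨A, hA, hAc⟩ := lower_count (p := p) m B H hH1 hHB hBp hG
    have hst := stepanov_s18 (p := p) (n := H) hℓ hm (fun h : Fin H => (((h : ℕ) + 1 : ℕ) : ZMod p))
      (by
        intro i j hij
        have h1 := (ZMod.natCast_eq_natCast_iff' _ _ _).1 hij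
        rw [Nat.mod_eq_of_lt (by omega), Nat.mod_eq_of_lt (by omega)] at h1
        exact Fin.ext (by omega))
      (by
        intro i hi
        have h1 := (ZMod.natCast_eq_zero_iff _ _).1 hi
        have := Nat.le_of_dvd (by omega) h1
        omega)
      D H s hlt (Nat.sqrt_le_self p) hcount A hA
    have hstR : (s : ℝ) * A.card ≤ p * (H + H) := by exact_mod_cast hst
    have d1 : (s : ℝ) * B ^ 2 ≤ 16 * H ^ 2 * p := by
      calc (s : ℝ) * B ^ 2 ≤ s * (8 * H * A.card) := by gcongr
        _ = 8 * H * (s * A.card) := by ring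
        _ ≤ 8 * H * (p * (H + H)) := by gcongr
        _ = _ := by ring
    have d2 : 16 * (H : ℝ) ^ 2 * p ≤ 16 * (0.9022 * L) ^ 2 * p := by gcongr
    have d3 : (0.99 * T ^ 2) * (21.9 * (T * L) ^ 2) ≤ (s : ℝ) * B ^ 2 := by
      gcongr
      linarith
    rw [← hTp] at d1 d2
    have d4 : 0 < T ^ 4 * L ^ 2 := by positivity
    nlinarith

end Final

theorem norton_bound (p : ℕ) [Fact p.Prime]
    (χ : DirichletCharacter ℂ p) (hχ : χ ≠ 1)
    (q₁ : ℕ) (hq₁ : q₁.Prime)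
    (hnr₁ : χ (q₁ : ZMod p) ∉ ({0, 1} : Set ℂ))
    (hmin₁ : ∀ q : ℕ, q.Prime → χ (q : ZMod p) ∉ ({0, 1} : Set ℂ) → q₁ ≤ q) :
    (q₁ : ℝ) < 4.7 * (p : ℝ) ^ ((1:ℝ)/4) * Real.log p := by
  have hlt := q_lt_p χ hχ q₁ hmin₁
  have hel := elem_bound χ hχ q₁ hq₁ hnr₁ hmin₁
  have h2 := hq₁.two_le
  set T : ℝ := (p : ℝ) ^ ((1:ℝ)/4) with hT
  have hT0 : 0 ≤ T := by positivity
  have hTp : T ^ 4 = p := by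
    rw [hT, ← Real.rpow_natCast, ← Real.rpow_mul (by positivity)]
    norm_num
  have hTlog : Real.log p = 4 * Real.log T := by
    rw [← hTp, Real.log_pow]; norm_num
  have hqq : (q₁ - 1) ^ 2 < p := by
    obtain ⟨k, rfl⟩ : ∃ k, q₁ = k + 2 := ⟨q₁ - 2, by omega⟩
    have e : k + 2 - 1 = k + 1 := by omega
    rw [e] at hel ⊢
    nlinarith
  have hqR : ((q₁ : ℝ) - 1) ^ 2 < p := by
    have : ((q₁ - 1 : ℕ) : ℝ) ^ 2 < p := by exact_mod_cast hqq
    rwa [Nat.cast_sub (by omega), Nat.cast_one] at this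
  rcases le_total T 64 with h | h
  · have hq : (q₁ : ℝ) - 1 < T ^ 2 := by
      rw [← hTp] at hqR
      nlinarith [sq_nonneg T]
    have hT1 : 1.3 ≤ T := by
      by_contra hc
      push Not at hc
      have h3 : (3 : ℝ) ≤ p := by exact_mod_cast (by omega : 3 ≤ p)
      have : T ^ 4 ≤ 1.3 ^ 4 := by gcongr
      norm_num at this
      linarith
    have := small_num T hT1 h
    rw [hTlog]
    linarith
  · by_contra hc
    push Not at hc
    obtain ⟨ℓ, m, hℓ, hm, hpow⟩ := char_to_pow χ hχ
    refine large_case (p := p) T (Real.log p) (q₁ - 1) ℓ m h hTp rfl hqq ?_ hℓ hm ?_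
    · rw [Nat.cast_sub (by omega)]
      push_cast
      linarith
    · intro N h1 h2
      exact hpow _ (res_below χ q₁ hmin₁ N h1 (by omega) (by omega))
end
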